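/- Let V be a finite-dimensional irreducible ⊠_q-module of type 1, and let ^{ρ²}V denote V twisted via ρ², where ρ is the automorphism of ⊠_q sending each generator x_{ij} ↦ x_{i+1,j+1}. Then V and ^{ρ²}V are isomorphic as ⊠_q-modules; that is, there exists an F-linear bijection σ: V → V such that σ(x_{ij}·v) = x_{i+2,j+2}·σ(v) for all generators x_{ij} of ⊠_q and all v ∈ V. -/

import Mathlib

/-!
Write `x_p` for the operators by which the generators act on `V`, and put `A = x_{01}`,
`B = x_{23}`.  The idea is to identify `V` with its dual in two ways.

The generators incident to a vertex `r ∈ ℤ/4ℤ` share one flag of `V`: the `q`-Weyl relation between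
`x_{hi}` and `x_{ij}` makes the ascending eigenspace flag of the first equal to the descending one
of the second (`QW.low_eq_high`), and every eigenspace of `x_{ij}` is an intersection of steps of
the flags at `i` and `j`.  Since `A` and `B` see all four flags, a linear map intertwining `A` and
`B` intertwines all generators (`TetSys.intertwine`).  By a dimension count on the same flags, a
nonzero vector `v` with `A v = q^{-d} v` generates `V` under `A` and `B` alone (`TetSys.cyclic`).

Let `e` be the idempotent of `A` for the eigenvalue `q^{-d}`.  By the `q`-Serre relations `B` is
block tridiagonal with respect to `A`, and conversely; hence `A^a B^n A^{N-a}` is, up to rescaling,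
a polynomial in `q^{2a}` of degree at most `2n` (`TDPair.triple_poly`).  Interpolation gives both
that `e B^i A^j B^l e` is symmetric in `i` and `l` (`TDPair.comm3`) and that all `e w e`, `w` a word
in `A`, `B`, are polynomials in the commuting elements `e B^k e` (`TDPair.gen`).  Consequently
`e w* e = e w e`, where `w*` is the reversed word (`TDPair.key`).

Therefore, for a functional `ε` factoring through `e` with `ε v ≠ 0`, the map
`w v ↦ (u ↦ ε (w* u))` is a well defined isomorphism from `V` to its dual that carries `x_{ij}` to
the transpose of `x_{1-j,1-i}` (`TetSys.exists_dual_iso`).  The same statement for the shifted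
generators `x_{i+1,j+1}` gives an isomorphism carrying `x_{ij}` to the transpose of `x_{3-j,3-i}`.
One of them followed by the inverse of the other carries `x_{ij}` to `x_{i+2,j+2}`.
-/


noncomputable section

open FreeAlgebra

variable (F : Type) [Field F]

/-- The defining relations of the algebra `□_q` (Terwilliger), on the free algebra
with generators `x_i`, `i ∈ ℤ/4ℤ`. -/
inductive BoxRel (q : F) : FreeAlgebra F (ZMod 4) → FreeAlgebra F (ZMod 4) → Prop
  | rel1 (i : ZMod 4) : BoxRel q
      (q • (ι F i * ι F (i + 1)) - q⁻¹ • (ι F (i + 1) * ι F i))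
      ((q - q⁻¹) • (1 : FreeAlgebra F (ZMod 4)))
  | rel2 (i : ZMod 4) : BoxRel q
      (ι F i ^ 3 * ι F (i + 2) +
        ((q ^ 3 - (q⁻¹) ^ 3) / (q - q⁻¹)) • (ι F i * ι F (i + 2) * ι F i ^ 2))
      (((q ^ 3 - (q⁻¹) ^ 3) / (q - q⁻¹)) • (ι F i ^ 2 * ι F (i + 2) * ι F i) +
        ι F (i + 2) * ι F i ^ 3)

/-- The algebra `□_q`, presented by generators and relations. -/
abbrev BoxQ (q : F) : Type := RingQuot (BoxRel F q)

/-- The generators `x_i` of `□_q`. -/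
def bx (q : F) (i : ZMod 4) : BoxQ F q :=
  RingQuot.mkAlgHom F (BoxRel F q) (ι F i)

/-- `f` acts semisimply: `V` is spanned by the eigenspaces of `f`. -/
def SemisimpleOn {V : Type} [AddCommGroup V] [Module F V] (f : Module.End F V) : Prop :=
  (⨆ θ : F, Module.End.eigenspace f θ) = ⊤

/-- The set of (distinct) eigenvalues of `f`. -/
def EigSet {V : Type} [AddCommGroup V] [Module F V] (f : Module.End F V) : Set F :=
  {θ : F | Module.End.eigenspace f θ ≠ ⊥}

/-- The representation `π` of `A` on `V` is irreducible. -/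
def IsIrrep {A V : Type} [Ring A] [Algebra F A] [AddCommGroup V] [Module F V]
    (π : A →ₐ[F] Module.End F V) : Prop :=
  Nontrivial V ∧ ∀ W : Submodule F V, (∀ a : A, ∀ v ∈ W, π a v ∈ W) → W = ⊥ ∨ W = ⊤

/-- Isomorphism of representations of `A`. -/
def RepIso {A V W : Type} [Ring A] [Algebra F A] [AddCommGroup V] [Module F V]
    [AddCommGroup W] [Module F W]
    (π : A →ₐ[F] Module.End F V) (π' : A →ₐ[F] Module.End F W) : Prop :=
  ∃ σ : V ≃ₗ[F] W, ∀ (a : A) (v : V), σ (π a v) = π' a (σ v)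

/-- Index set for the generators `x_{ij}` of the `q`-tetrahedron algebra:
pairs `(i,j)` of elements of `ℤ/4ℤ` with `j - i ∈ {1, 2}`. -/
def TIdx : Type := {p : ZMod 4 × ZMod 4 // p.2 - p.1 = 1 ∨ p.2 - p.1 = 2}

/-- The defining relations of the `q`-tetrahedron algebra `⊠_q`. -/
inductive TetRel (q : F) : FreeAlgebra F TIdx → FreeAlgebra F TIdx → Prop
  | inv (i j : ZMod 4) (h : j - i = 2) (h' : i - j = 2) :
      TetRel q (ι F ⟨(i, j), Or.inr h⟩ * ι F ⟨(j, i), Or.inr h'⟩)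
        (1 : FreeAlgebra F TIdx)
  | qrel (p r : TIdx) (hpr : p.val.2 = r.val.1)
      (hne : ¬(p.val.2 - p.val.1 = 2 ∧ r.val.2 - r.val.1 = 2)) :
      TetRel q (q • (ι F p * ι F r) - q⁻¹ • (ι F r * ι F p))
        ((q - q⁻¹) • (1 : FreeAlgebra F TIdx))
  | serre (h i j k : ZMod 4) (h1 : i - h = 1) (h2 : j - i = 1) (h3 : k - j = 1) :
      TetRel q
        (ι F ⟨(h, i), Or.inl h1⟩ ^ 3 * ι F ⟨(j, k), Or.inl h3⟩ +
          ((q ^ 3 - (q⁻¹) ^ 3) / (q - q⁻¹)) •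
            (ι F ⟨(h, i), Or.inl h1⟩ * ι F ⟨(j, k), Or.inl h3⟩ * ι F ⟨(h, i), Or.inl h1⟩ ^ 2))
        (((q ^ 3 - (q⁻¹) ^ 3) / (q - q⁻¹)) •
            (ι F ⟨(h, i), Or.inl h1⟩ ^ 2 * ι F ⟨(j, k), Or.inl h3⟩ * ι F ⟨(h, i), Or.inl h1⟩) +
          ι F ⟨(j, k), Or.inl h3⟩ * ι F ⟨(h, i), Or.inl h1⟩ ^ 3)

/-- The `q`-tetrahedron algebra `⊠_q`. -/
abbrev TetQ (q : F) : Type := RingQuot (TetRel F q)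

/-- The generators `x_{ij}` of `⊠_q`. -/
def tg (q : F) (p : TIdx) : TetQ F q :=
  RingQuot.mkAlgHom F (TetRel F q) (ι F p)

/-- Shifting a generator index: `(i,j) ↦ (i+1, j+1)`. -/
def tshift (p : TIdx) : TIdx :=
  ⟨(p.val.1 + 1, p.val.2 + 1), by
    have h : p.val.2 + 1 - (p.val.1 + 1) = p.val.2 - p.val.1 := by ring
    rw [h]; exact p.prop⟩

/-! ### Eigenvalues and spectral idempotents -/

/-- `q` is nonzero and not a root of unity. -/
structure QGen {𝕜 : Type*} [Field 𝕜] (q : 𝕜) : Prop where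
  ne0 : q ≠ 0
  pow_ne : ∀ n : ℕ, 0 < n → q ^ n ≠ 1

section Spectral

open Polynomial Finset

variable {𝕜 : Type*} [Field 𝕜] {q : 𝕜} {d : ℕ}

theorem QGen.zpow_inj (hq : QGen q) {a b : ℤ} (h : q ^ a = q ^ b) : a = b := by
  have key : ∀ m : ℤ, 0 < m → q ^ m ≠ 1 := by
    intro m hm h1
    obtain ⟨n, rfl⟩ := Int.eq_ofNat_of_zero_le hm.le
    rw [zpow_natCast] at h1
    exact hq.pow_ne n (by exact_mod_cast hm) h1
  have h1 : q ^ (a - b) = 1 := by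
    rw [zpow_sub₀ hq.ne0, h, div_self (zpow_ne_zero _ hq.ne0)]
  have h2 : q ^ (b - a) = 1 := by
    rw [zpow_sub₀ hq.ne0, h, div_self (zpow_ne_zero _ hq.ne0)]
  rcases lt_trichotomy a b with h3 | h3 | h3
  · exact absurd h2 (key _ (by omega))
  · exact h3
  · exact absurd h1 (key _ (by omega))

theorem QGen.pow_inj (hq : QGen q) {a b : ℕ} (h : (q ^ 2) ^ a = (q ^ 2) ^ b) : a = b := by
  have : q ^ ((2 * a : ℕ) : ℤ) = q ^ ((2 * b : ℕ) : ℤ) := by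
    rw [zpow_natCast, zpow_natCast, pow_mul, pow_mul, h]
  have := hq.zpow_inj this
  omega

theorem QGen.sub_inv_ne (hq : QGen q) : q - q⁻¹ ≠ 0 := by
  intro h
  have h1 : q ^ (1 : ℤ) = q ^ (-1 : ℤ) := by
    rw [zpow_one, zpow_neg_one]; exact sub_eq_zero.mp h
  have := hq.zpow_inj h1
  omega

theorem QGen.three (hq : QGen q) :
    (q ^ 3 - (q⁻¹) ^ 3) / (q - q⁻¹) = q ^ 2 + 1 + (q⁻¹) ^ 2 := by
  rw [div_eq_iff hq.sub_inv_ne]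
  have := hq.ne0
  field_simp
  ring

variable (q d) in
/-- The eigenvalues `q^{2n-d}` of the generators, in increasing order of the exponent. -/
def th (n : ℕ) : 𝕜 := q ^ (2 * (n : ℤ) - (d : ℤ))

theorem th_inj (hq : QGen q) : Function.Injective (th q d) := by
  intro a b h
  have := hq.zpow_inj h
  omega

theorem th_ne (hq : QGen q) (n : ℕ) : th q d n ≠ 0 := zpow_ne_zero _ hq.ne0

theorem th_add (hq : QGen q) (n m : ℕ) : th q d (n + m) = (q ^ 2) ^ m * th q d n := by
  unfold th
  rw [← pow_mul, ← zpow_natCast, ← zpow_add₀ hq.ne0]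
  congr 1
  push_cast; ring

variable {R : Type*} [Ring R] [Algebra 𝕜 R]

variable (q d) in
/-- The polynomial `∏_{n ≤ d} (X - q^{2n-d})` annihilates `A`. -/
def Ann (A : R) : Prop := aeval A (∏ n ∈ range (d + 1), (X - C (th q d n))) = 0

variable (q d) in
/-- The spectral idempotent of `A` for the eigenvalue `q^{2n-d}`. -/
def sp (A : R) (n : ℕ) : R := aeval A (Lagrange.basis (range (d + 1)) (th q d) n)

variable {A : R}

theorem Ann.aeval_zero (hA : Ann q d A) (hq : QGen q) {p : 𝕜[X]}
    (hp : ∀ n ≤ d, p.eval (th q d n) = 0) : aeval A p = 0 := by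
  have : (∏ n ∈ range (d + 1), (X - C (th q d n))) ∣ p := by
    apply Finset.prod_dvd_of_coprime
    · intro a _ b _ hab
      exact pairwise_coprime_X_sub_C (th_inj hq) hab
    · intro i hi
      rw [dvd_iff_isRoot]
      exact hp i (by simpa [Nat.lt_succ_iff] using hi)
  obtain ⟨r, rfl⟩ := this
  rw [map_mul, hA, zero_mul]

theorem Ann.aeval_congr (hA : Ann q d A) (hq : QGen q) {p r : 𝕜[X]}
    (hp : ∀ n ≤ d, p.eval (th q d n) = r.eval (th q d n)) : aeval A p = aeval A r := by
  rw [← sub_eq_zero, ← map_sub]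
  exact hA.aeval_zero hq fun n hn => by rw [eval_sub, hp n hn, sub_self]

theorem eval_basis_th (hq : QGen q) {m n : ℕ} (hm : m ≤ d) :
    (Lagrange.basis (range (d + 1)) (th q d) n).eval (th q d m) = if m = n then 1 else 0 := by
  split_ifs with h
  · subst h
    exact Lagrange.eval_basis_self ((th_inj hq).injOn) (by simp; omega)
  · exact Lagrange.eval_basis_of_ne (Ne.symm h) (by simp; omega)

theorem Ann.aeval_mul_sp (hA : Ann q d A) (hq : QGen q) (p : 𝕜[X]) (n : ℕ) :
    aeval A p * sp q d A n = p.eval (th q d n) • sp q d A n := by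
  unfold sp
  rw [← map_mul, ← map_smul]
  apply hA.aeval_congr hq
  intro m hm
  rw [eval_mul, eval_smul, eval_basis_th hq hm]
  split_ifs with h <;> simp [h]

theorem Ann.sp_mul_aeval (hA : Ann q d A) (hq : QGen q) (p : 𝕜[X]) (n : ℕ) :
    sp q d A n * aeval A p = p.eval (th q d n) • sp q d A n := by
  rw [← hA.aeval_mul_sp hq, sp, ← map_mul, ← map_mul, mul_comm]

theorem Ann.pow_mul_sp (hA : Ann q d A) (hq : QGen q) (a : ℕ) (n : ℕ) :
    A ^ a * sp q d A n = (th q d n) ^ a • sp q d A n := by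
  have := hA.aeval_mul_sp hq (X ^ a) n
  simpa using this

theorem Ann.sp_mul_pow (hA : Ann q d A) (hq : QGen q) (a : ℕ) (n : ℕ) :
    sp q d A n * A ^ a = (th q d n) ^ a • sp q d A n := by
  have := hA.sp_mul_aeval hq (X ^ a) n
  simpa using this

theorem sum_sp (hq : QGen q) : ∑ n ∈ range (d + 1), sp q d A n = 1 := by
  unfold sp
  rw [← map_sum, Lagrange.sum_basis ((th_inj hq).injOn) (by simp), map_one]

theorem Ann.sp_mul_self (hA : Ann q d A) (hq : QGen q) {n : ℕ} (hn : n ≤ d) :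
    sp q d A n * sp q d A n = sp q d A n := by
  conv_lhs => enter [1]; rw [sp]
  rw [hA.aeval_mul_sp hq, eval_basis_th hq hn]; simp

theorem Ann.sp_mul_ne (hA : Ann q d A) (hq : QGen q) {n m : ℕ} (hn : n ≤ d) (h : n ≠ m) :
    sp q d A m * sp q d A n = 0 := by
  conv_lhs => enter [1]; rw [sp]
  rw [hA.aeval_mul_sp hq, eval_basis_th hq hn]; simp [h]

theorem Ann.aeval_eq_sum (hA : Ann q d A) (hq : QGen q) (p : 𝕜[X]) :
    aeval A p = ∑ n ∈ range (d + 1), p.eval (th q d n) • sp q d A n := by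
  rw [← mul_one (aeval A p), ← sum_sp (A := A) (d := d) hq, mul_sum]
  exact sum_congr rfl fun n _ => hA.aeval_mul_sp hq p n

theorem Ann.pow_eq_sum (hA : Ann q d A) (hq : QGen q) (a : ℕ) :
    A ^ a = ∑ n ∈ range (d + 1), (th q d n) ^ a • sp q d A n := by
  have := hA.aeval_eq_sum hq (X ^ a)
  simpa using this

end Spectral

/-! ### Pairs satisfying the q-Serre relations: the palindromic identity -/

section Words

open Polynomial Finset

variable {𝕜 : Type*} [Field 𝕜] {q : 𝕜} {d : ℕ} {R : Type*} [Ring R] [Algebra 𝕜 R]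

variable (q) in
/-- The cubic `q`-Serre relation between `A` and `B`. -/
def Serre (A B : R) : Prop :=
  A ^ 3 * B + ((q ^ 3 - (q⁻¹) ^ 3) / (q - q⁻¹)) • (A * B * A ^ 2) =
    ((q ^ 3 - (q⁻¹) ^ 3) / (q - q⁻¹)) • (A ^ 2 * B * A) + B * A ^ 3

variable (q d) in
/-- A pair of elements with eigenvalues among the `q^{2n-d}` satisfying both
`q`-Serre relations. -/
structure TDPair (A B : R) : Prop where
  annA : Ann q d A
  annB : Ann q d B
  serreAB : Serre q A B
  serreBA : Serre q B A

theorem TDPair.symm {A B : R} (h : TDPair q d A B) : TDPair q d B A :=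
  ⟨h.annB, h.annA, h.serreBA, h.serreAB⟩

variable {A B : R}

/-- Block tridiagonality of `B` with respect to the eigenspaces of `A`. -/
theorem TDPair.tri (h : TDPair q d A B) (hq : QGen q) {i j : ℕ} (hij : i + 1 < j ∨ j + 1 < i) :
    sp q d A i * B * sp q d A j = 0 := by
  have hs := congrArg (fun z => sp q d A i * z * sp q d A j) h.serreAB
  have e1 : ∀ a b, sp q d A i * (A ^ a * B * A ^ b) * sp q d A j =
      ((th q d i) ^ a * (th q d j) ^ b) • (sp q d A i * B * sp q d A j) := by
    intro a b
    calc _ = (sp q d A i * A ^ a) * B * (A ^ b * sp q d A j) := by simp only [mul_assoc]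
      _ = _ := by
        rw [h.annA.sp_mul_pow hq, h.annA.pow_mul_sp hq]
        simp only [smul_mul_assoc, mul_smul_comm, smul_smul]
        rw [mul_comm]
  have e30 := e1 3 0
  have e12 := e1 1 2
  have e21 := e1 2 1
  have e03 := e1 0 3
  simp only [pow_zero, pow_one, one_mul, mul_one] at e30 e12 e21 e03
  simp only [mul_add, add_mul, mul_smul_comm, smul_mul_assoc, e30, e12, e21, e03] at hs
  rw [← sub_eq_zero, hq.three] at hs
  set X := sp q d A i * B * sp q d A j
  set x := th q d i with hx
  set y := th q d j with hy
  have hs2 : ((x - y) * (x - q ^ 2 * y) * (x - (q⁻¹) ^ 2 * y)) • X = 0 := by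
    rw [← hs]
    have hqq : q * q⁻¹ = 1 := mul_inv_cancel₀ hq.ne0
    have : (x - y) * (x - q ^ 2 * y) * (x - (q⁻¹) ^ 2 * y) =
      x ^ 3 + (q ^ 2 + 1 + q⁻¹ ^ 2) * (x * y ^ 2) -
        ((q ^ 2 + 1 + q⁻¹ ^ 2) * (x ^ 2 * y) + y ^ 3) := by
      linear_combination (x * y ^ 2 - y ^ 3) * (q * q⁻¹ + 1) * hqq
    rw [this]
    module
  refine (smul_eq_zero.mp hs2).resolve_left ?_
  have hsh : q ^ 2 * y = th q d (j + 1) := by rw [th_add hq, pow_one]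
  have hsh' : q ^ 2 * x = th q d (i + 1) := by rw [th_add hq, pow_one]
  refine mul_ne_zero (mul_ne_zero ?_ ?_) ?_
  · rw [sub_ne_zero]; intro h; have := th_inj hq h; omega
  · rw [sub_ne_zero, hsh]; intro h; have := th_inj hq h; omega
  · rw [sub_ne_zero]; intro h
    have : q ^ 2 * x = y := by rw [h]; have := hq.ne0; field_simp
    rw [hsh'] at this
    have := th_inj hq this; omega

/-- `B ^ n` moves an eigenspace of `A` by at most `n` steps. -/
theorem TDPair.tri_pow (h : TDPair q d A B) (hq : QGen q) (n : ℕ) : ∀ {i j : ℕ},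
    (j ≤ d) → (i + n < j ∨ j + n < i) → sp q d A i * B ^ n * sp q d A j = 0 := by
  induction n with
  | zero =>
    intro i j hj hij
    rw [pow_zero, mul_one]
    exact h.annA.sp_mul_ne hq hj (by omega)
  | succ n ih =>
    intro i j hj hij
    have : sp q d A i * B ^ (n + 1) * sp q d A j =
        ∑ k ∈ range (d + 1), (sp q d A i * B ^ n * sp q d A k) * (sp q d A k * B * sp q d A j) := by
      have h1 : sp q d A i * B ^ (n + 1) * sp q d A j =
        sp q d A i * B ^ n * (∑ k ∈ range (d + 1), sp q d A k) * (B * sp q d A j) := by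
        rw [sum_sp hq, pow_succ]; simp only [mul_assoc, mul_one]
      rw [h1, mul_sum, sum_mul]
      refine sum_congr rfl fun k hk => ?_
      conv_lhs => rw [← h.annA.sp_mul_self hq (n := k) (by simpa [Nat.lt_succ_iff] using hk)]
      simp only [mul_assoc]
    rw [this]
    refine sum_eq_zero fun k hk => ?_
    have hk' : k ≤ d := by simpa [Nat.lt_succ_iff] using hk
    by_cases hik : i + n < k ∨ k + n < i
    · rw [ih hk' hik, zero_mul]
    · rw [h.tri hq (i := k) (j := j) (by omega), mul_zero]

/-- The products `A^a B^n A^{N-a}`, suitably rescaled, depend polynomially on `q^{2a}`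
with degree at most `2n`. -/
theorem TDPair.triple_poly (h : TDPair q d A B) (hq : QGen q) (N n : ℕ) :
    ∃ K : ℕ → R, ∀ a ≤ N, ((q ^ 2) ^ a) ^ n • (A ^ a * B ^ n * A ^ (N - a)) =
      ∑ k ∈ range (2 * n + 1), ((q ^ 2) ^ a) ^ k • K k := by
  refine ⟨fun k => ∑ i ∈ range (d + 1), ∑ j ∈ range (d + 1),
    if n + i = j + k then (th q d j) ^ N • (sp q d A i * B ^ n * sp q d A j) else 0, ?_⟩
  intro a ha
  have h1 : A ^ a * B ^ n * A ^ (N - a) = ∑ i ∈ range (d + 1), ∑ j ∈ range (d + 1),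
      ((th q d i) ^ a * (th q d j) ^ (N - a)) • (sp q d A i * B ^ n * sp q d A j) := by
    conv_lhs => rw [h.annA.pow_eq_sum hq a, h.annA.pow_eq_sum hq (N - a)]
    rw [sum_mul, sum_mul]
    refine sum_congr rfl fun i _ => ?_
    rw [mul_sum]
    refine sum_congr rfl fun j _ => ?_
    simp only [smul_mul_assoc, mul_smul_comm, smul_smul]
    rw [mul_comm]
  rw [h1]
  simp only [smul_sum]
  rw [sum_comm]
  symm
  rw [sum_comm]
  simp only [sum_comm (s := range (2 * n + 1))]
  rw [sum_comm]
  refine sum_congr rfl fun j hj => sum_congr rfl fun i hi => ?_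
  have hj' : j ≤ d := by simpa [Nat.lt_succ_iff] using hj
  by_cases hij : i + n < j ∨ j + n < i
  · simp [h.tri_pow hq n hj' hij]
  · rw [sum_eq_single (n + i - j)]
    · rw [if_pos (by omega), smul_smul, smul_smul]
      congr 1
      have e1 : (q ^ 2) ^ n * th q d i = (q ^ 2) ^ (n + i - j) * th q d j := by
        rw [← th_add hq, ← th_add hq]; congr 1; omega
      have e2 : (th q d j) ^ N = (th q d j) ^ a * (th q d j) ^ (N - a) := by
        rw [← pow_add]; congr 1; omega
      rw [e2, pow_right_comm, pow_right_comm _ a n, ← mul_assoc,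
        ← mul_assoc, ← mul_pow, ← mul_pow, e1]
    · intro k _ hk
      rw [if_neg (by omega), smul_zero]
    · intro hk
      exact absurd (mem_range.mpr (by omega)) hk

/-- A vector-valued polynomial of degree `< m` whose values at `m` distinct nodes lie in a
subspace takes all its values in that subspace. -/
theorem interp_mem {M : Type*} [AddCommGroup M] [Module 𝕜 M] (S : Submodule 𝕜 M)
    (T : Finset ℕ) (v : ℕ → 𝕜) (hv : Set.InjOn v T) (m : ℕ) (hm : m ≤ #T) (K : ℕ → M)
    (hT : ∀ s ∈ T, ∑ k ∈ range m, (v s) ^ k • K k ∈ S) (t : 𝕜) :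
    ∑ k ∈ range m, t ^ k • K k ∈ S := by
  have key : ∀ k < m, t ^ k = ∑ s ∈ T, (v s) ^ k * (Lagrange.basis T v s).eval t := by
    intro k hk
    have h1 : (X ^ k : 𝕜[X]) = Lagrange.interpolate T v fun s => (X ^ k : 𝕜[X]).eval (v s) := by
      apply Lagrange.eq_interpolate hv
      rw [degree_X_pow]
      exact_mod_cast lt_of_lt_of_le hk hm
    have h2 := congrArg (eval t) h1
    rw [Lagrange.interpolate_apply, eval_finsetSum] at h2
    simpa using h2
  have : ∑ k ∈ range m, t ^ k • K k =
      ∑ s ∈ T, (Lagrange.basis T v s).eval t • ∑ k ∈ range m, (v s) ^ k • K k := by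
    simp only [smul_sum]
    rw [sum_comm]
    refine sum_congr rfl fun k hk => ?_
    rw [key k (mem_range.mp hk), sum_smul]
    refine sum_congr rfl fun s _ => ?_
    rw [smul_smul, mul_comm]
  rw [this]
  exact S.sum_mem fun s hs => S.smul_mem _ (hT s hs)

/-- Since `e B^a` only meets the eigenspaces of `A` of index at most `a`, a polynomial in `A`
vanishing at those eigenvalues annihilates it. -/
theorem TDPair.kill_right (h : TDPair q d A B) (hq : QGen q) {a : ℕ} {p : 𝕜[X]}
    (hp : ∀ k ≤ a, k ≤ d → p.eval (th q d k) = 0) : sp q d A 0 * B ^ a * aeval A p = 0 := by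
  rw [h.annA.aeval_eq_sum hq, mul_sum]
  refine sum_eq_zero fun k hk => ?_
  have hk' : k ≤ d := by simpa [Nat.lt_succ_iff] using hk
  rw [mul_smul_comm]
  by_cases hka : k ≤ a
  · rw [hp k hka hk', zero_smul]
  · rw [h.tri_pow hq a hk' (by omega), smul_zero]

theorem TDPair.kill_left (h : TDPair q d A B) (hq : QGen q) {a : ℕ} {p : 𝕜[X]}
    (hp : ∀ k ≤ a, k ≤ d → p.eval (th q d k) = 0) : aeval A p * (B ^ a * sp q d A 0) = 0 := by
  rw [h.annA.aeval_eq_sum hq, sum_mul]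
  refine sum_eq_zero fun k hk => ?_
  rw [smul_mul_assoc]
  by_cases hka : k ≤ a
  · rw [hp k hka (by simpa [Nat.lt_succ_iff] using hk), zero_smul]
  · rw [← mul_assoc, h.tri_pow hq a (Nat.zero_le d) (by omega), smul_zero]

theorem QGen.pow_inj' (hq : QGen q) : Function.Injective (fun m : ℕ => q ^ m) := by
  intro a b h
  have : q ^ (a : ℤ) = q ^ (b : ℤ) := by simpa using h
  have := hq.zpow_inj this
  omega

/-- The interpolation polynomial of `X ^ j` at the nodes `th q d s, …, th q d (s + m - 1)`. -/
theorem exists_interp (hq : QGen q) (d s m j : ℕ) : ∃ r : 𝕜[X], r.degree < (m : ℕ) ∧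
    ∀ k, s ≤ k → k < s + m → r.eval (th q d k) = (th q d k) ^ j := by
  have hc : #(Ico s (s + m)) = m := by simp
  refine ⟨Lagrange.interpolate (Ico s (s + m)) (th q d) fun k => (th q d k) ^ j, ?_, ?_⟩
  · have := Lagrange.degree_interpolate_lt (s := Ico s (s + m)) (v := th q d)
      (fun k => (th q d k) ^ j) ((th_inj hq).injOn)
    rwa [hc] at this
  · intro k h1 h2
    exact Lagrange.eval_interpolate_at_node _ ((th_inj hq).injOn) (mem_Ico.mpr ⟨h1, h2⟩)

theorem aeval_eq_sum_of_degree (A : R) {r : 𝕜[X]} {m : ℕ} (hr : r.degree < (m : ℕ)) :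
    aeval A r = ∑ k ∈ range m, r.coeff k • A ^ k := by
  rcases Nat.eq_zero_or_pos m with rfl | hm
  · have : r = 0 := by
      rw [← degree_eq_bot];
      exact Nat.WithBot.lt_zero_iff.mp (by exact_mod_cast hr)
    simp [this]
  · apply aeval_eq_sum_range'
    by_cases h0 : r = 0
    · simpa [h0] using hm
    · exact (natDegree_lt_iff_degree_lt h0).mpr hr

/-- The palindromic identity `e B^i A^j B^l e = e B^l A^j B^i e`, where `e` is the idempotent of
`A` for its lowest eigenvalue. -/
theorem TDPair.comm3 (h : TDPair q d A B) (hq : QGen q) (j : ℕ) : ∀ i l : ℕ,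
    sp q d A 0 * (B ^ i * A ^ j * B ^ l) * sp q d A 0 =
      sp q d A 0 * (B ^ l * A ^ j * B ^ i) * sp q d A 0 := by
  induction j using Nat.strong_induction_on with
  | _ j ih =>
  set e := sp q d A 0 with he
  -- when one of the outer exponents is below `j`, a lower degree polynomial in `A` replaces `A ^ j`
  have hsmall : ∀ i l : ℕ, i < j → e * (B ^ i * A ^ j * B ^ l) * e =
      e * (B ^ l * A ^ j * B ^ i) * e := by
    intro i l hi
    obtain ⟨r, hr, hr'⟩ := exists_interp hq d 0 (i + 1) j
    have hz : ∀ k ≤ i, (X ^ j - r).eval (th q d k) = 0 := by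
      intro k hk
      rw [eval_sub, hr' k (by omega) (by omega)]; simp
    have h1 := h.kill_right hq fun k hk _ => hz k hk
    have h2 := h.kill_left hq fun k hk _ => hz k hk
    rw [map_sub, map_pow, aeval_X, mul_sub, sub_eq_zero] at h1
    rw [map_sub, map_pow, aeval_X, sub_mul, sub_eq_zero] at h2
    have hs := aeval_eq_sum_of_degree A hr
    calc e * (B ^ i * A ^ j * B ^ l) * e = (e * B ^ i * A ^ j) * (B ^ l * e) := by
          simp only [mul_assoc]
      _ = ∑ k ∈ range (i + 1), r.coeff k • (e * (B ^ i * A ^ k * B ^ l) * e) := by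
          rw [h1, hs, mul_sum, sum_mul]
          refine sum_congr rfl fun k _ => ?_
          simp only [mul_smul_comm, smul_mul_assoc, mul_assoc, he]
      _ = ∑ k ∈ range (i + 1), r.coeff k • (e * (B ^ l * A ^ k * B ^ i) * e) := by
          refine sum_congr rfl fun k hk => ?_
          rw [ih k (by have := mem_range.mp hk; omega)]
      _ = (e * B ^ l) * (A ^ j * (B ^ i * e)) := by
          rw [h2, hs, sum_mul, mul_sum]
          refine sum_congr rfl fun k _ => ?_
          simp only [mul_smul_comm, smul_mul_assoc, mul_assoc, he]
      _ = _ := by simp only [mul_assoc]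
  have hsmall' : ∀ i l : ℕ, i < j ∨ l < j → e * (B ^ i * A ^ j * B ^ l) * e =
      e * (B ^ l * A ^ j * B ^ i) * e := by
    intro i l hil
    rcases hil with hil | hil
    · exact hsmall i l hil
    · exact (hsmall l i hil).symm
  intro i l
  by_cases hil : i < j ∨ l < j
  · exact hsmall' i l hil
  obtain ⟨K, hK⟩ := h.symm.triple_poly hq (i + l) j
  set N := i + l with hN
  set κ : ℕ → R := fun k => e * K k * e with hκ
  set f : ℕ → R := fun a => e * (B ^ a * A ^ j * B ^ (N - a)) * e with hf
  have hfa : ∀ a ≤ N, ((q ^ 2) ^ a) ^ j • f a = ∑ k ∈ range (2 * j + 1), ((q ^ 2) ^ a) ^ k • κ k := by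
    intro a ha
    have := congrArg (fun z => e * z * e) (hK a ha)
    simpa only [mul_smul_comm, smul_mul_assoc, mul_sum, sum_mul] using this
  -- With `C = q^{2N}` and `t = q^{2a}`, the quantity `C^j t^j (f(a) - f(N-a))` is a polynomial in
  -- `t` of degree at most `2j`, with coefficients `K'`.  It vanishes at the `2j` points with `a < j`
  -- or `a > N - j` by `hsmall`, and at `t = q^N` by antisymmetry, hence identically.
  set C : 𝕜 := (q ^ 2) ^ N with hC
  set K' : ℕ → R := fun k => C ^ j • κ k - C ^ (2 * j - k) • κ (2 * j - k) with hK'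
  have hrefl : ∀ t : 𝕜, ∑ k ∈ range (2 * j + 1), t ^ k • K' k =
      ∑ k ∈ range (2 * j + 1), (C ^ j * t ^ k - C ^ k * t ^ (2 * j - k)) • κ k := by
    intro t
    have : ∑ k ∈ range (2 * j + 1), (C ^ k * t ^ (2 * j - k)) • κ k =
        ∑ k ∈ range (2 * j + 1), (C ^ (2 * j - k) * t ^ k) • κ (2 * j - k) := by
      rw [← sum_range_reflect]
      refine sum_congr rfl fun k hk => ?_
      have := mem_range.mp hk
      have e1 : 2 * j + 1 - 1 - k = 2 * j - k := by omega
      have e2 : 2 * j - (2 * j - k) = k := by omega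
      rw [e1, e2]
    simp only [sub_smul, sum_sub_distrib, this]
    rw [← sum_sub_distrib]
    refine sum_congr rfl fun k _ => ?_
    simp only [hK', smul_sub, smul_smul]
    rw [mul_comm (t ^ k), mul_comm (t ^ k)]
  have hg : ∀ a ≤ N, ∑ k ∈ range (2 * j + 1), ((q ^ 2) ^ a) ^ k • K' k =
      (C ^ j * ((q ^ 2) ^ a) ^ j) • (f a - f (N - a)) := by
    intro a ha
    have hCt : C = (q ^ 2) ^ (N - a) * (q ^ 2) ^ a := by
      rw [hC, ← pow_add]; congr 1; omega
    rw [hrefl, smul_sub]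
    simp only [sub_smul, sum_sub_distrib]
    congr 1
    · rw [mul_smul, hfa a ha, smul_sum]
      exact sum_congr rfl fun k _ => by rw [smul_smul]
    · have e1 : C ^ j * ((q ^ 2) ^ a) ^ j = ((q ^ 2) ^ a) ^ (2 * j) * ((q ^ 2) ^ (N - a)) ^ j := by
        rw [hCt]; ring
      rw [e1, mul_smul, hfa (N - a) (by omega), smul_sum]
      refine sum_congr rfl fun k hk => ?_
      have hk' := mem_range.mp hk
      rw [smul_smul]
      congr 1
      have : ((q ^ 2) ^ a) ^ (2 * j) = ((q ^ 2) ^ a) ^ k * ((q ^ 2) ^ a) ^ (2 * j - k) := by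
        rw [← pow_add]; congr 1; omega
      rw [this, hCt, mul_pow]; ring
  -- The nodes are `q^m` with `m ∈ T`: `m = N`, or `m = 2a` for the `2j` values of `a` above.
  -- They are distinct because `N` is either odd or twice a number in `[j, N - j]`.
  set T : Finset ℕ := insert N ((range j ∪ Ioc (N - j) N).image (2 * ·)) with hT
  have hTcard : 2 * j + 1 ≤ #T := by
    rw [hT, card_insert_of_notMem, card_image_of_injective, card_union_of_disjoint]
    · simp; omega
    · rw [Finset.disjoint_left]
      intro x hx hx'
      simp at hx hx'; omega
    · intro x y hxy
      simpa using hxy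
    · simp only [mem_image, mem_union, mem_range, mem_Ioc, not_exists, not_and]
      intro x hx; omega
  have hzero := interp_mem (⊥ : Submodule 𝕜 R) T (fun m => q ^ m) (hq.pow_inj'.injOn) (2 * j + 1)
    hTcard K' (by
      intro s hs
      rw [Submodule.mem_bot]
      rw [hT, mem_insert, mem_image] at hs
      rcases hs with rfl | ⟨a, ha, rfl⟩
      · rw [hrefl]
        refine sum_eq_zero fun k hk => ?_
        have hk' := mem_range.mp hk
        have : C ^ j * (q ^ N) ^ k - C ^ k * (q ^ N) ^ (2 * j - k) = 0 := by
          have e0 : C = (q ^ N) ^ 2 := by rw [hC, ← pow_mul, ← pow_mul, mul_comm]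
          rw [e0]
          generalize q ^ N = s
          rw [← pow_mul, ← pow_mul, ← pow_add, ← pow_add, sub_eq_zero]
          congr 1; omega
        rw [this, zero_smul]
      · simp only [mem_union, mem_range, mem_Ioc] at ha
        have haN : a ≤ N := by omega
        have e1 : q ^ (2 * a) = (q ^ 2) ^ a := by rw [pow_mul]
        simp only [e1]
        rw [hg a haN]
        have hfe : f a = f (N - a) := by
          simp only [hf]
          rw [hsmall' a (N - a) (by omega)]
          congr 4; omega
        rw [hfe, sub_self, smul_zero]) ((q ^ 2) ^ i)
  rw [Submodule.mem_bot, hg i (by omega)] at hzero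
  have hne : C ^ j * ((q ^ 2) ^ i) ^ j ≠ 0 := by
    have := hq.ne0
    rw [hC]; positivity
  have h2 := (smul_eq_zero.mp hzero).resolve_left hne
  rw [sub_eq_zero] at h2
  simp only [hf] at h2
  have e1 : N - i = l := by omega
  have e2 : N - l = i := by omega
  rw [e1, e2] at h2
  exact h2

end Words

/-! ### The corner `e T e` is generated by the elements `e B^k e` -/

section Gen

open Polynomial Finset

variable {𝕜 : Type*} [Field 𝕜] {q : 𝕜} {d : ℕ} {R : Type*} [Ring R] [Algebra 𝕜 R]

/-- The letters of the alternating words: `B` for `true`, `A` for `false`. -/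
def letter (A B : R) (g : Bool) : R := if g then B else A

/-- The alternating word in `A`, `B` with exponent list `l`, whose first letter is `letter A B g`. -/
def wd (A B : R) : Bool → List ℕ → R
  | _, [] => 1
  | g, t :: l => letter A B g ^ t * wd A B (!g) l

/-- The letter that follows an alternating word of exponent list `l` starting with `g`. -/
def aft : Bool → List ℕ → Bool
  | g, [] => g
  | g, _ :: l => aft (!g) l

theorem wd_append (A B : R) (l₁ l₂ : List ℕ) : ∀ g : Bool,
    wd A B g (l₁ ++ l₂) = wd A B g l₁ * wd A B (aft g l₁) l₂ := by
  induction l₁ with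
  | nil => intro g; simp [wd, aft]
  | cons t l ih => intro g; simp [wd, aft, ih, mul_assoc]

theorem aft_append (l₁ l₂ : List ℕ) : ∀ g : Bool, aft g (l₁ ++ l₂) = aft (aft g l₁) l₂ := by
  induction l₁ with
  | nil => intro g; simp [aft]
  | cons t l ih => intro g; simp [aft, ih]

variable {A B : R}

theorem TDPair.letters (h : TDPair q d A B) (g : Bool) :
    TDPair q d (letter A B g) (letter A B (!g)) := by
  cases g
  · exact h
  · exact h.symm

/-- `e B^n A^t` is a combination of `e B^n e` and the `e B^n A^m` with `m < n`; the mirror image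
holds with the same coefficients. -/
theorem TDPair.reduce_right (h : TDPair q d A B) (hq : QGen q) (n t : ℕ) :
    ∃ (c : 𝕜) (r : ℕ → 𝕜), sp q d A 0 * B ^ n * A ^ t = c • (sp q d A 0 * B ^ n * sp q d A 0) +
        ∑ m ∈ range n, r m • (sp q d A 0 * B ^ n * A ^ m) ∧
      A ^ t * (B ^ n * sp q d A 0) = c • (sp q d A 0 * (B ^ n * sp q d A 0)) +
        ∑ m ∈ range n, r m • (A ^ m * (B ^ n * sp q d A 0)) := by
  obtain ⟨r, hr, hr'⟩ := exists_interp hq d 1 n t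
  set c : 𝕜 := (th q d 0) ^ t - r.eval (th q d 0) with hc
  have hz : ∀ k ≤ n, k ≤ d → (X ^ t - r -
      c • Lagrange.basis (range (d + 1)) (th q d) 0).eval (th q d k) = 0 := by
    intro k hk hkd
    rw [eval_sub, eval_sub, eval_smul, eval_basis_th hq hkd]
    split_ifs with h0
    · subst h0; simp [hc]
    · rw [hr' k (by omega) (by omega)]; simp
  have h1 := h.kill_right hq hz
  have h2 := h.kill_left hq hz
  have hs := aeval_eq_sum_of_degree A hr
  have he : aeval A (Lagrange.basis (range (d + 1)) (th q d) 0) = sp q d A 0 := rfl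
  rw [map_sub, map_sub, map_smul, he, hs, map_pow, aeval_X] at h1 h2
  refine ⟨c, fun m => r.coeff m, ?_, ?_⟩
  · rw [mul_sub, mul_sub, mul_sum, sub_sub, sub_eq_zero] at h1
    rw [h1, add_comm]
    simp only [mul_smul_comm]
  · rw [sub_mul, sub_mul, sum_mul, sub_sub, sub_eq_zero] at h2
    rw [h2, add_comm]
    simp only [smul_mul_assoc]

/-- Every `e w e`, with `w` a word in `A` and `B`, lies in any multiplicatively closed subspace
containing all `e B^k e`. -/
theorem TDPair.gen (h : TDPair q d A B) (hq : QGen q) (C : Submodule 𝕜 R)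
    (hmul : ∀ x ∈ C, ∀ y ∈ C, x * y ∈ C)
    (hC : ∀ k, sp q d A 0 * B ^ k * sp q d A 0 ∈ C) (L : ℕ) : ∀ (g : Bool) (l : List ℕ),
    l.length ≤ L → sp q d A 0 * wd A B g l * sp q d A 0 ∈ C := by
  set e := sp q d A 0 with he
  have hee : e * e = e := h.annA.sp_mul_self hq (Nat.zero_le d)
  have hee' : ∀ z, e * (e * z) = e * z := fun z => by rw [← mul_assoc, hee]
  have heA : ∀ t, e * A ^ t = (th q d 0) ^ t • e := fun t => h.annA.sp_mul_pow hq t 0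
  have hAe : ∀ t, A ^ t * e = (th q d 0) ^ t • e := fun t => h.annA.pow_mul_sp hq t 0
  have he1 : e ∈ C := by
    have := hC 0
    rwa [pow_zero, mul_one, hee] at this
  induction L with
  | zero =>
    intro g l hl
    have : l = [] := List.eq_nil_of_length_eq_zero (by omega)
    subst this
    simpa [wd, hee] using he1
  | succ L ihL =>
  -- Words with `L + 1` blocks, by induction on an exponent `n` occurring in the word, then on its
  -- position `j`: the exponent is moved to the left end or traded for a smaller one.
  have main : ∀ n j : ℕ, ∀ (pre suf : List ℕ) (g : Bool), pre.length = j →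
      pre.length + suf.length = L → e * wd A B g (pre ++ n :: suf) * e ∈ C := by
    intro n
    induction n using Nat.strong_induction_on with
    | _ n ihn =>
    intro j
    induction j with
    | zero =>
      intro pre suf g hpre hlen
      have : pre = [] := List.eq_nil_of_length_eq_zero hpre
      subst this
      cases g with
      | false =>
        have : e * wd A B false ([] ++ n :: suf) * e =
            (th q d 0) ^ n • (e * wd A B true suf * e) := by
          simp only [List.nil_append, wd, letter, Bool.not_false]
          rw [if_neg (by simp), ← mul_assoc, heA, smul_mul_assoc, smul_mul_assoc]
        rw [this]
        exact C.smul_mem _ (ihL _ _ (by simp at hlen; omega))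
      | true =>
        cases suf with
        | nil => simpa [wd, letter] using hC n
        | cons t suf =>
          by_cases htn : t < n
          · exact ihn t htn 1 [n] suf true rfl (by simp at hlen ⊢; omega)
          obtain ⟨c, r, hr, -⟩ := h.reduce_right hq n t
          have hw : ∀ m, e * wd A B true (n :: m :: suf) * e =
              (e * B ^ n * A ^ m) * (wd A B true suf * e) := by
            intro m
            simp [wd, letter, mul_assoc]
          rw [List.nil_append, hw t, hr, add_mul, sum_mul]
          refine C.add_mem ?_ (C.sum_mem ?_)
          · have : c • (e * B ^ n * e) * (wd A B true suf * e) =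
              c • ((e * B ^ n * e) * (e * wd A B true suf * e)) := by
              rw [smul_mul_assoc]
              simp only [mul_assoc, hee']
            rw [← he, this]
            exact C.smul_mem _ (hmul _ (hC n) _ (ihL _ _ (by simp at hlen; omega)))
          · intro m hm
            rw [smul_mul_assoc, ← hw m]
            exact C.smul_mem _
              (ihn m (mem_range.mp hm) 1 [n] suf true rfl (by simp at hlen ⊢; omega))
    | succ j ihj =>
      intro pre suf g hpre hlen
      obtain ⟨pre, x, rfl⟩ : ∃ p x, pre = p ++ [x] := by
        refine ⟨pre.dropLast, pre.getLast (by intro h0; simp [h0] at hpre), ?_⟩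
        rw [List.dropLast_append_getLast]
      simp only [List.length_append, List.length_singleton] at hpre hlen
      obtain ⟨s, hs⟩ : ∃ s, aft g pre = s := ⟨_, rfl⟩
      cases suf with
      | nil =>
        have hw : ∀ m, e * wd A B g (pre ++ [m] ++ [n]) * e =
            (e * wd A B g pre) * (letter A B s ^ m * (letter A B (!s) ^ n * e)) := by
          intro m
          rw [List.append_assoc, wd_append, hs]
          simp [wd, mul_assoc]
        cases s with
        | true =>
          have : e * wd A B g (pre ++ [x] ++ [n]) * e =
              (th q d 0) ^ n • (e * wd A B g (pre ++ [x]) * e) := by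
            rw [wd_append, aft_append, hs]
            simp only [wd, aft, letter, Bool.not_true, mul_one]
            rw [if_neg (by simp), mul_assoc, mul_assoc, hAe, mul_smul_comm, mul_smul_comm,
              mul_assoc]
          rw [this]
          exact C.smul_mem _ (ihL _ _ (by simp at hlen ⊢; omega))
        | false =>
          by_cases hxn : x < n
          · have := ihn x hxn j pre [n] g (by omega) (by simpa using hlen)
            simpa using this
          obtain ⟨c, r, -, hr⟩ := h.reduce_right hq n x
          have hw' : ∀ m, e * wd A B g (pre ++ [m] ++ [n]) * e =
            (e * wd A B g pre) * (A ^ m * (B ^ n * e)) := by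
            intro m
            rw [hw m]; simp [letter]
          rw [hw' x, hr, mul_add, mul_sum]
          refine C.add_mem ?_ (C.sum_mem ?_)
          · have : e * wd A B g pre * c • (e * (B ^ n * e)) =
              c • ((e * wd A B g pre * e) * (e * B ^ n * e)) := by
              rw [mul_smul_comm]
              simp only [mul_assoc, hee']
            rw [← he, this]
            exact C.smul_mem _ (hmul _ (ihL _ _ (by simp at hlen; omega)) _ (hC n))
          · intro m hm
            rw [mul_smul_comm, ← hw' m]
            have := ihn m (mem_range.mp hm) j pre [n] g (by omega) (by simpa using hlen)
            exact C.smul_mem _ (by simpa using this)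
      | cons y suf =>
        have hw : ∀ a b c, e * wd A B g (pre ++ [a] ++ b :: c :: suf) * e =
            (e * wd A B g pre) * (letter A B s ^ a * letter A B (!s) ^ b * letter A B s ^ c) *
              (wd A B (!s) suf * e) := by
          intro a b c
          rw [List.append_assoc, wd_append, hs]
          simp [wd, mul_assoc]
        simp only [List.length_cons] at hlen
        by_cases hxn : x < n
        · have := ihn x hxn j pre (n :: y :: suf) g (by omega) (by simp; omega)
          simpa using this
        by_cases hyn : y < n
        · have := ihn y hyn (j + 2) (pre ++ [x, n]) suf g (by simp; omega) (by simp; omega)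
          simpa using this
        -- The block `x, n, y` belongs to the family `a, n, x + y - a`.  For `a < n`, `x + y - a < n`
        -- (smaller exponent) and `a = n` (exponent `n` one step to the left) the induction
        -- hypotheses apply; these are `2n + 1` nodes, enough to interpolate to `a = x`.
        obtain ⟨K, hK⟩ := (h.letters s).triple_poly hq (x + y) n
        set φ : R →ₗ[𝕜] R := (LinearMap.mulRight 𝕜 (wd A B (!s) suf * e)).comp
          (LinearMap.mulLeft 𝕜 (e * wd A B g pre)) with hφ
        have hφa : ∀ z, φ z = (e * wd A B g pre) * z * (wd A B (!s) suf * e) := fun z => rfl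
        have hS := interp_mem (C.comap φ) (range (n + 1) ∪ Ioc (x + y - n) (x + y))
          (fun a => (q ^ 2) ^ a) (fun a _ b _ hab => hq.pow_inj hab) (2 * n + 1) (by
            rw [card_union_of_disjoint]
            · simp; omega
            · rw [Finset.disjoint_left]
              intro a ha ha'
              simp at ha ha'; omega) K (by
            intro a ha
            simp only [mem_union, mem_range, mem_Ioc] at ha
            rw [← hK a (by omega)]
            refine Submodule.smul_mem _ _ ?_
            rw [Submodule.mem_comap, hφa, ← hw]
            by_cases h1 : a < n
            · have := ihn a h1 j pre (n :: (x + y - a) :: suf) g (by omega) (by simp; omega)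
              simpa using this
            by_cases h2 : a = n
            · have := ihj pre (n :: (x + y - a) :: suf) g (by omega) (by simp; omega)
              rw [h2] at this ⊢
              simpa using this
            · have := ihn (x + y - a) (by omega) (j + 2) (pre ++ [a, n]) suf g
                (by simp; omega) (by simp; omega)
              simpa using this) ((q ^ 2) ^ x)
        rw [← hK x (by omega)] at hS
        have hne : ((q ^ 2) ^ x) ^ n ≠ 0 := by have := hq.ne0; positivity
        have hS2 := (Submodule.smul_mem_iff _ hne).mp hS
        rw [Submodule.mem_comap, hφa, ← hw] at hS2
        have exy : x + y - x = y := by omega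
        rwa [exy] at hS2
  intro g l hl
  rcases Nat.lt_or_ge l.length (L + 1) with h1 | h1
  · exact ihL g l (by omega)
  · cases l with
    | nil => simp at h1
    | cons n suf => exact main n 0 [] suf g rfl (by simp at h1 hl ⊢; omega)

end Gen

/-! ### Invariance of `e w e` under reversal of words -/

section Key

open Polynomial Finset MulOpposite

variable {𝕜 : Type*} [Field 𝕜] {q : 𝕜} {d : ℕ} {R : Type*} [Ring R] [Algebra 𝕜 R]

theorem aeval_op (A : R) (p : 𝕜[X]) : aeval (op A) p = op (aeval A p) := by
  induction p using Polynomial.induction_on' with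
  | add p r hp hr => rw [map_add, map_add, hp, hr, op_add]
  | monomial n a =>
    rw [aeval_monomial, aeval_monomial, op_mul, op_pow]
    exact (Algebra.commutes a _)

theorem aeval_prod_op (A : R) (p : 𝕜[X]) :
    aeval ((A, op A) : R × Rᵐᵒᵖ) p = (aeval A p, op (aeval A p)) := by
  have h1 := aeval_algHom_apply (AlgHom.fst 𝕜 R Rᵐᵒᵖ) (A, op A) p
  have h2 := aeval_algHom_apply (AlgHom.snd 𝕜 R Rᵐᵒᵖ) (A, op A) p
  rw [← aeval_op]
  exact Prod.ext h1.symm h2.symm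

theorem Ann.prod_op {A : R} (hA : Ann q d A) : Ann q d ((A, op A) : R × Rᵐᵒᵖ) := by
  unfold Ann at *
  rw [aeval_prod_op, hA]; rfl

theorem Serre.prod_op {A B : R} (h : Serre q A B) :
    Serre q ((A, op A) : R × Rᵐᵒᵖ) ((B, op B) : R × Rᵐᵒᵖ) := by
  unfold Serre at *
  refine Prod.ext h ?_
  have := congrArg op h
  simp only [op_add, op_smul, op_mul, op_pow] at this
  simp only [Prod.snd_add, Prod.smul_snd, Prod.snd_mul, Prod.pow_snd]
  rw [add_comm, eq_comm, add_comm]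
  simpa only [mul_assoc] using this

/-- Evaluation of noncommutative polynomials in two letters at `A`, `B`. -/
def ev (A B : R) : FreeAlgebra 𝕜 Bool →ₐ[𝕜] R := FreeAlgebra.lift 𝕜 (letter A B)

theorem ev_ι (A B : R) (g : Bool) : ev (𝕜 := 𝕜) A B (FreeAlgebra.ι 𝕜 g) = letter A B g := by
  simp [ev]

theorem ev_prod_op (A B : R) (w : FreeAlgebra 𝕜 Bool) :
    ev ((A, op A) : R × Rᵐᵒᵖ) (B, op B) w = (ev A B w, op (ev A B (star w))) := by
  induction w using FreeAlgebra.induction with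
  | grade0 r => simp
  | grade1 g => rw [FreeAlgebra.star_ι, ev_ι, ev_ι]; cases g <;> rfl
  | mul a b ha hb => rw [map_mul, ha, hb, star_mul, map_mul, map_mul]; rfl
  | add a b ha hb => rw [map_add, ha, hb, star_add, map_add, map_add]; rfl

/-- Alternating words span the algebra generated by `A` and `B`. -/
theorem ev_mem_span (A B : R) (w : FreeAlgebra 𝕜 Bool) :
    ev A B w ∈ Submodule.span 𝕜 (Set.range (wd A B true)) := by
  set S := Submodule.span 𝕜 (Set.range (wd A B true)) with hS
  have hl : ∀ g, ∀ z ∈ S, letter A B g * z ∈ S := by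
    intro g z hz
    induction hz using Submodule.span_induction with
    | mem x hx =>
      obtain ⟨l, rfl⟩ := hx
      cases g
      · exact Submodule.subset_span ⟨0 :: 1 :: l, by simp [wd]⟩
      · exact Submodule.subset_span ⟨1 :: 0 :: l, by simp [wd]⟩
    | zero => simp
    | add x y _ _ hx hy => rw [mul_add]; exact S.add_mem hx hy
    | smul a x _ hx => rw [mul_smul_comm]; exact S.smul_mem _ hx
  have hw : ∀ z ∈ S, ev A B w * z ∈ S := by
    induction w using FreeAlgebra.induction with
    | grade0 r =>
      intro z hz
      rw [AlgHom.commutes, ← Algebra.smul_def]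
      exact S.smul_mem _ hz
    | grade1 g => intro z hz; rw [ev_ι]; exact hl g z hz
    | mul a b ha hb => intro z hz; rw [map_mul, mul_assoc]; exact ha _ (hb _ hz)
    | add a b ha hb => intro z hz; rw [map_add, add_mul]; exact S.add_mem (ha _ hz) (hb _ hz)
  have := hw 1 (Submodule.subset_span ⟨[], rfl⟩)
  rwa [mul_one] at this

/-- The elements `e B^i e` commute: the middle `e` is a polynomial in `A`, so the palindromic
identity applies term by term. -/
theorem TDPair.comm_beta {A B : R} (h : TDPair q d A B) (hq : QGen q) (i l : ℕ) :
    (sp q d A 0 * B ^ i * sp q d A 0) * (sp q d A 0 * B ^ l * sp q d A 0) =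
      (sp q d A 0 * B ^ l * sp q d A 0) * (sp q d A 0 * B ^ i * sp q d A 0) := by
  have hee := h.annA.sp_mul_self hq (Nat.zero_le d)
  have key : ∀ i l : ℕ, (sp q d A 0 * B ^ i * sp q d A 0) * (sp q d A 0 * B ^ l * sp q d A 0) =
      ∑ m ∈ range ((Lagrange.basis (range (d + 1)) (th q d) 0).natDegree + 1),
        (Lagrange.basis (range (d + 1)) (th q d) 0).coeff m •
          (sp q d A 0 * (B ^ i * A ^ m * B ^ l) * sp q d A 0) := by
    intro i l
    calc _ = sp q d A 0 * B ^ i * (sp q d A 0 * sp q d A 0) * B ^ l * sp q d A 0 := by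
          simp only [mul_assoc]
      _ = sp q d A 0 * B ^ i * aeval A (Lagrange.basis (range (d + 1)) (th q d) 0) *
          B ^ l * sp q d A 0 := by rw [hee]; rfl
      _ = _ := by
        rw [aeval_eq_sum_range, mul_sum, sum_mul, sum_mul]
        refine sum_congr rfl fun m _ => ?_
        simp only [mul_smul_comm, smul_mul_assoc, mul_assoc]
  rw [key i l, key l i]
  exact sum_congr rfl fun m _ => by rw [h.comm3 hq m i l]

/-- Reversal of words does not change `e w e`, where `e` is the spectral idempotent of `A` for
its lowest eigenvalue.  The pair `(A, op A)`, `(B, op B)` in `R × Rᵐᵒᵖ` satisfies the same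
relations, so `e w e` and `e w* e` are given by the same expression in the `e B^k e`; these commute,
hence the order of the factors does not matter. -/
theorem TDPair.key {A B : R} (h : TDPair q d A B) (hq : QGen q) (w : FreeAlgebra 𝕜 Bool) :
    sp q d A 0 * ev A B (star w) * sp q d A 0 = sp q d A 0 * ev A B w * sp q d A 0 := by
  set e := sp q d A 0 with he
  have h' : TDPair q d ((A, op A) : R × Rᵐᵒᵖ) (B, op B) :=
    ⟨h.annA.prod_op, h.annB.prod_op, h.serreAB.prod_op, h.serreBA.prod_op⟩
  have he' : sp q d ((A, op A) : R × Rᵐᵒᵖ) 0 = (e, op e) := aeval_prod_op _ _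
  set C0 : Subalgebra 𝕜 R := Algebra.adjoin 𝕜 (Set.range fun k => e * B ^ k * e) with hC0
  have hcomm : ∀ x ∈ C0, ∀ y ∈ C0, x * y = y * x := by
    intro x hx y hy
    refine Algebra.commute_of_mem_adjoin_of_forall_mem_commute hy ?_
    rintro _ ⟨l, rfl⟩
    refine (Algebra.commute_of_mem_adjoin_of_forall_mem_commute hx ?_).symm
    rintro _ ⟨i, rfl⟩
    exact h.comm_beta hq l i
  set δ : R →ₗ[𝕜] R × Rᵐᵒᵖ := LinearMap.prod LinearMap.id (opLinearEquiv 𝕜 : R ≃ₗ[𝕜] Rᵐᵒᵖ)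
  have hδ : ∀ x, δ x = (x, op x) := fun x => rfl
  set C : Submodule 𝕜 (R × Rᵐᵒᵖ) := (Subalgebra.toSubmodule C0).map δ with hC
  have hgen := h'.gen hq C (by
    rintro _ ⟨x, hx, rfl⟩ _ ⟨y, hy, rfl⟩
    refine ⟨x * y, C0.mul_mem hx hy, ?_⟩
    rw [hδ, hδ, hδ, Prod.mk_mul_mk, ← op_mul, hcomm x hx y hy]) (by
    intro k
    refine ⟨e * B ^ k * e, Algebra.subset_adjoin ⟨k, rfl⟩, ?_⟩
    rw [hδ, he', Prod.pow_mk, Prod.mk_mul_mk, Prod.mk_mul_mk]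
    simp only [op_mul, op_pow, mul_assoc])
  have hall : ∀ z ∈ Submodule.span 𝕜 (Set.range (wd ((A, op A) : R × Rᵐᵒᵖ) (B, op B) true)),
      (e, op e) * z * (e, op e) ∈ C := by
    intro z hz
    induction hz using Submodule.span_induction with
    | mem x hx =>
      obtain ⟨l, rfl⟩ := hx
      rw [← he']
      exact hgen l.length true l le_rfl
    | zero => simp
    | add x y _ _ hx hy => rw [mul_add, add_mul]; exact C.add_mem hx hy
    | smul a x _ hx => rw [mul_smul_comm, smul_mul_assoc]; exact C.smul_mem _ hx
  obtain ⟨x, -, hx⟩ := hall _ (ev_mem_span (𝕜 := 𝕜) _ _ w)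
  rw [hδ, ev_prod_op, Prod.mk_mul_mk, Prod.mk_mul_mk, Prod.mk.injEq] at hx
  have h2 := congrArg unop hx.2
  simp only [unop_mul, unop_op] at h2
  rw [← hx.1, h2, mul_assoc]

end Key

/-! ### Eigenspace flags of a system of generators -/

section Flags

open Polynomial Finset Module

variable {𝕜 : Type*} [Field 𝕜] {q : 𝕜} {d : ℕ} {V : Type*} [AddCommGroup V] [Module 𝕜 V]

theorem Ann.sp_apply_mul {x : End 𝕜 V} (hx : Ann q d x) (hq : QGen q) (n : ℕ) (v : V) :
    sp q d x n (x v) = th q d n • sp q d x n v := by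
  have := congrArg (fun f : End 𝕜 V => f v) (hx.sp_mul_pow hq 1 n)
  simpa using this

theorem Ann.apply_sp {x : End 𝕜 V} (hx : Ann q d x) (hq : QGen q) (n : ℕ) (v : V) :
    x (sp q d x n v) = th q d n • sp q d x n v := by
  have := congrArg (fun f : End 𝕜 V => f v) (hx.pow_mul_sp hq 1 n)
  simpa using this

theorem sum_sp_apply (x : End 𝕜 V) (hq : QGen q) (v : V) :
    ∑ n ∈ range (d + 1), sp q d x n v = v := by
  have := congrArg (fun f : End 𝕜 V => f v) (sum_sp (A := x) (d := d) hq)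
  simpa using this

/-- If `x v = t v` then `v` has no component in an eigenspace for another eigenvalue. -/
theorem Ann.sp_eq_zero {x : End 𝕜 V} (hx : Ann q d x) (hq : QGen q) {n : ℕ} {t : 𝕜} {v : V}
    (hv : x v = t • v) (ht : th q d n ≠ t) : sp q d x n v = 0 := by
  have h1 := hx.sp_apply_mul hq n v
  rw [hv, map_smul] at h1
  have h2 : (th q d n - t) • sp q d x n v = 0 := by rw [sub_smul, h1, sub_self]
  exact (smul_eq_zero.mp h2).resolve_left (sub_ne_zero.mpr ht)

theorem th_mul_th (hq : QGen q) {n : ℕ} (hn : n ≤ d) : th q d n * th q d (d - n) = 1 := by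
  unfold th
  rw [← zpow_add₀ hq.ne0, ← zpow_zero q]
  congr 1
  push_cast [Nat.cast_sub hn]; ring

variable (q d) in
/-- The sum of the eigenspaces of `x` for the `m` lowest eigenvalues `th q d 0, …, th q d (m - 1)`,
defined by the vanishing of the other components. -/
def Low (x : End 𝕜 V) (m : ℕ) : Submodule 𝕜 V where
  carrier := {v | ∀ n, m ≤ n → n ≤ d → sp q d x n v = 0}
  add_mem' := by
    intro a b ha hb n h1 h2
    rw [map_add, ha n h1 h2, hb n h1 h2, add_zero]
  zero_mem' := by intro n _ _; simp
  smul_mem' := by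
    intro c a ha n h1 h2
    rw [map_smul, ha n h1 h2, smul_zero]

variable (q d) in
/-- The sum of the eigenspaces of `x` for the `m` highest eigenvalues
`th q d d, …, th q d (d - m + 1)`. -/
def High (x : End 𝕜 V) (m : ℕ) : Submodule 𝕜 V where
  carrier := {v | ∀ n, n + m ≤ d → sp q d x n v = 0}
  add_mem' := by
    intro a b ha hb n h1
    rw [map_add, ha n h1, hb n h1, add_zero]
  zero_mem' := by intro n _; simp
  smul_mem' := by
    intro c a ha n h1
    rw [map_smul, ha n h1, smul_zero]

theorem mem_Low {x : End 𝕜 V} {m : ℕ} {v : V} :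
    v ∈ Low q d x m ↔ ∀ n, m ≤ n → n ≤ d → sp q d x n v = 0 := Iff.rfl

theorem mem_High {x : End 𝕜 V} {m : ℕ} {v : V} :
    v ∈ High q d x m ↔ ∀ n, n + m ≤ d → sp q d x n v = 0 := Iff.rfl

theorem Low_mono (x : End 𝕜 V) {m m' : ℕ} (h : m ≤ m') : Low q d x m ≤ Low q d x m' :=
  fun _ hv n h1 h2 => hv n (h.trans h1) h2

theorem High_mono (x : End 𝕜 V) {m m' : ℕ} (h : m ≤ m') : High q d x m ≤ High q d x m' :=
  fun _ hv n h1 => hv n (by omega)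

/-- The eigenspaces are intersections of the two opposite flags. -/
theorem Ann.mem_eig_iff {x : End 𝕜 V} (hx : Ann q d x) (hq : QGen q) {n : ℕ} (hn : n ≤ d) {v : V} :
    x v = th q d n • v ↔ v ∈ Low q d x (n + 1) ∧ v ∈ High q d x (d + 1 - n) := by
  constructor
  · intro hv
    refine ⟨fun k h1 _ => hx.sp_eq_zero hq hv fun h => ?_, fun k h1 => hx.sp_eq_zero hq hv fun h => ?_⟩
    · have := th_inj hq h; omega
    · have := th_inj hq h; omega
  · rintro ⟨h1, h2⟩
    have : sp q d x n v = v := by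
      conv_rhs => rw [← sum_sp_apply (d := d) x hq v]
      rw [sum_eq_single n]
      · intro k hk hkn
        have := mem_range.mp hk
        rcases lt_or_gt_of_ne hkn with h | h
        · exact h2 k (by omega)
        · exact h1 k (by omega) (by omega)
      · intro h; exact absurd (mem_range.mpr (by omega)) h
    rw [← this]
    exact hx.apply_sp hq n v

variable (q) in
/-- The relation `(q x y - q⁻¹ y x) / (q - q⁻¹) = 1`. -/
def QW (x y : End 𝕜 V) : Prop := q • (x * y) - q⁻¹ • (y * x) = (q - q⁻¹) • (1 : End 𝕜 V)

theorem QW.apply {x y : End 𝕜 V} (h : QW q x y) (v : V) :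
    q • x (y v) - q⁻¹ • y (x v) = (q - q⁻¹) • v := by
  have := congrArg (fun f : End 𝕜 V => f v) h
  simpa using this

theorem QW.yx {x y : End 𝕜 V} (h : QW q x y) (hq : QGen q) (v : V) :
    y (x v) = q ^ 2 • x (y v) - (q ^ 2 - 1) • v := by
  have h1 := congrArg (fun z => q • z) (h.apply v)
  simp only [smul_sub, smul_smul, mul_inv_cancel₀ hq.ne0, one_smul] at h1
  have h2 : q * (q - q⁻¹) = q ^ 2 - 1 := by rw [mul_sub, mul_inv_cancel₀ hq.ne0]; ring
  rw [h2] at h1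
  rw [← h1, ← pow_two]; abel

theorem QW.xy {x y : End 𝕜 V} (h : QW q x y) (hq : QGen q) (v : V) :
    q ^ 2 • x (y v) = y (x v) + (q ^ 2 - 1) • v := by
  rw [h.yx hq]; abel

/-- If `x v = th n • v`, then `y v - th (d - n) • v` is in the eigenspace of `x` for `th (n - 1)`;
induction on `n` bounds the components of `v` along `y`. -/
theorem QW.eig_high {x y : End 𝕜 V} (h : QW q x y) (hx : Ann q d x) (hy : Ann q d y) (hq : QGen q)
    (n : ℕ) : ∀ v, n ≤ d → x v = th q d n • v → v ∈ High q d y (n + 1) := by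
  induction n with
  | zero =>
    intro v _ hv
    set u := y v - th q d d • v with hu
    have hxu : q ^ 2 • x u = th q d 0 • u := by
      have h1 := th_mul_th hq (Nat.zero_le d)
      rw [Nat.sub_zero] at h1
      rw [hu, map_sub, map_smul, smul_sub, h.xy hq, hv, map_smul, smul_sub]
      simp only [smul_smul]
      rw [mul_comm (th q d d), h1]
      module
    have hu0 : u = 0 := by
      rw [← sum_sp_apply (d := d) x hq u]
      refine sum_eq_zero fun k _ => ?_
      have h1 := hx.sp_apply_mul hq k u
      have h2 := congrArg (fun z => sp q d x k z) hxu
      simp only [map_smul, h1, smul_smul] at h2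
      have h3 : (th q d (k + 1) - th q d 0) • sp q d x k u = 0 := by
        rw [sub_smul, ← h2, th_add hq, pow_one, sub_self]
      refine (smul_eq_zero.mp h3).resolve_left (sub_ne_zero.mpr fun h => ?_)
      have := th_inj hq h; omega
    intro k hk
    refine hy.sp_eq_zero hq (sub_eq_zero.mp hu0) fun h => ?_
    have := th_inj hq h; omega
  | succ n ih =>
    intro v hn hv
    set u := y v - th q d (d - (n + 1)) • v with hu
    have hxu : q ^ 2 • x u = q ^ 2 • th q d n • u := by
      have h1 := th_mul_th hq hn
      have h2 : q ^ 2 * th q d n = th q d (n + 1) := by rw [th_add hq, pow_one]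
      rw [smul_smul, h2]
      rw [hu, map_sub, map_smul, smul_sub, h.xy hq, hv, map_smul, smul_sub]
      simp only [smul_smul]
      rw [mul_comm (th q d (d - (n + 1))), h1]
      module
    have hxu' : x u = th q d n • u :=
      smul_right_injective V (pow_ne_zero 2 hq.ne0) hxu
    have hu' := ih u (by omega) hxu'
    intro k hk
    have h3 := hu' k (by omega)
    rw [hu, map_sub, map_smul, hy.sp_apply_mul hq, ← sub_smul] at h3
    refine (smul_eq_zero.mp h3).resolve_left (sub_ne_zero.mpr fun h => ?_)
    have := th_inj hq h; omega

theorem QW.eig_low {x y : End 𝕜 V} (h : QW q x y) (hx : Ann q d x) (hy : Ann q d y) (hq : QGen q)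
    (n : ℕ) : ∀ v, n ≤ d → y v = th q d (d - n) • v → v ∈ Low q d x (n + 1) := by
  have key : ∀ n v, n ≤ d → y v = th q d (d - n) • v →
      y (x v - th q d n • v) = th q d (d - n + 1) • (x v - th q d n • v) := by
    intro n v hn hv
    have h1 := th_mul_th hq hn
    have h2 : th q d (d - n + 1) = q ^ 2 * th q d (d - n) := by rw [th_add hq, pow_one]
    rw [h2, map_sub, h.yx hq, map_smul, hv, map_smul, smul_sub]
    simp only [smul_smul]
    have h3 : q ^ 2 * th q d (d - n) * th q d n = q ^ 2 := by
      rw [mul_assoc, mul_comm (th q d (d - n)), h1, mul_one]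
    rw [h1, h3]
    module
  induction n with
  | zero =>
    intro v hn hv
    have hu := key 0 v hn hv
    have hu0 : x v - th q d 0 • v = 0 := by
      rw [← sum_sp_apply (d := d) y hq (x v - th q d 0 • v)]
      refine sum_eq_zero fun k hk => hy.sp_eq_zero hq hu fun h => ?_
      have := th_inj hq h
      have := mem_range.mp hk; omega
    intro k hk _
    refine hx.sp_eq_zero hq (sub_eq_zero.mp hu0) fun h => ?_
    have := th_inj hq h; omega
  | succ n ih =>
    intro v hn hv
    have hu := key (n + 1) v hn hv
    have e1 : d - (n + 1) + 1 = d - n := by omega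
    rw [e1] at hu
    have hu' := ih _ (by omega) hu
    intro k hk hkd
    have h3 := hu' k (by omega) hkd
    rw [map_sub, map_smul, hx.sp_apply_mul hq, ← sub_smul] at h3
    refine (smul_eq_zero.mp h3).resolve_left (sub_ne_zero.mpr fun h => ?_)
    have := th_inj hq h; omega

/-- For a `q`-Weyl pair `x`, `y`, the ascending eigenspace flag of `x` is the descending one
of `y`. -/
theorem QW.low_eq_high {x y : End 𝕜 V} (h : QW q x y) (hx : Ann q d x) (hy : Ann q d y)
    (hq : QGen q) (m : ℕ) : Low q d x m = High q d y m := by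
  apply le_antisymm
  · intro v hv
    rw [← sum_sp_apply (d := d) x hq v]
    refine Submodule.sum_mem _ fun n hn => ?_
    have hn' := mem_range.mp hn
    by_cases hnm : m ≤ n
    · rw [hv n hnm (by omega)]; exact Submodule.zero_mem _
    · exact High_mono y (by omega)
        (h.eig_high hx hy hq n _ (by omega) (hx.apply_sp hq n v))
  · intro v hv
    rw [← sum_sp_apply (d := d) y hq v]
    refine Submodule.sum_mem _ fun n hn => ?_
    have hn' := mem_range.mp hn
    by_cases hnm : n + m ≤ d
    · rw [hv n hnm]; exact Submodule.zero_mem _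
    · refine Low_mono x (m := d - n + 1) (by omega)
        (h.eig_low hx hy hq (d - n) _ (by omega) ?_)
      have e1 : d - (d - n) = n := by omega
      rw [e1]
      exact hy.apply_sp hq n v

variable (q d) in
/-- Operators `x p` on `V`, indexed like the generators of `⊠_q`, that satisfy the defining
relations and have eigenvalues among `q^{-d}, q^{2-d}, …, q^d`. -/
structure TetSys (x : TIdx → End 𝕜 V) : Prop where
  ann : ∀ p, Ann q d (x p)
  inv : ∀ p r : TIdx, p.val.1 = r.val.2 → p.val.2 = r.val.1 → x p * x r = 1
  qrel : ∀ p r : TIdx, p.val.2 = r.val.1 →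
    ¬(p.val.2 - p.val.1 = 2 ∧ r.val.2 - r.val.1 = 2) → QW q (x p) (x r)
  serre : ∀ p r : TIdx, p.val.2 - p.val.1 = 1 → r.val.1 - p.val.2 = 1 → r.val.2 - r.val.1 = 1 →
    Serre q (x p) (x r)

/-- The index of the edge from `r` to `r + 1`. -/
def edge (r : ZMod 4) : TIdx := ⟨(r, r + 1), Or.inl (by ring)⟩

/-- The index of the diagonal from `r` to `r + 2`. -/
def diagIdx (r : ZMod 4) : TIdx := ⟨(r, r + 2), Or.inr (by ring)⟩

theorem idx_cases (p : TIdx) : p = edge p.val.1 ∨ p = diagIdx p.val.1 := by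
  obtain ⟨⟨i, j⟩, h⟩ := p
  rcases h with h | h
  · left
    apply Subtype.ext
    have : j = i + 1 := by rw [← h]; ring
    simp [edge, this]
  · right
    apply Subtype.ext
    have : j = i + 2 := by rw [← h]; ring
    simp [diagIdx, this]

variable (q d) in
/-- The flag attached to the vertex `r`: the descending flag of `x_{r,r+1}`.  It is the descending
flag of every generator `x_{r,j}` and the ascending flag of every `x_{i,r}`. -/
def Fl (x : TIdx → End 𝕜 V) (r : ZMod 4) (m : ℕ) : Submodule 𝕜 V := High q d (x (edge r)) m

theorem one_ne_two_zmod : (1 : ZMod 4) ≠ 2 := by decide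

theorem TetSys.low_eq {x : TIdx → End 𝕜 V} (h : TetSys q d x) (hq : QGen q) (p : TIdx) (m : ℕ) :
    Low q d (x p) m = Fl q d x p.val.2 m := by
  refine (h.qrel p (edge p.val.2) rfl ?_).low_eq_high (h.ann _) (h.ann _) hq m
  rintro ⟨-, h2⟩
  simp only [edge, add_sub_cancel_left] at h2
  exact one_ne_two_zmod h2

theorem TetSys.high_eq {x : TIdx → End 𝕜 V} (h : TetSys q d x) (hq : QGen q) (p : TIdx) (m : ℕ) :
    High q d (x p) m = Fl q d x p.val.1 m := by
  have e0 : (edge (p.val.1 - 1)).val.2 = p.val.1 := by simp [edge]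
  rw [← (h.qrel (edge (p.val.1 - 1)) p e0 ?_).low_eq_high (h.ann _) (h.ann _) hq m,
    h.low_eq hq, e0]
  rintro ⟨h2, -⟩
  simp only [edge, add_sub_cancel_left] at h2
  exact one_ne_two_zmod h2

theorem TetSys.eig_iff {x : TIdx → End 𝕜 V} (h : TetSys q d x) (hq : QGen q) (p : TIdx)
    {n : ℕ} (hn : n ≤ d) {v : V} :
    x p v = th q d n • v ↔ v ∈ Fl q d x p.val.2 (n + 1) ∧ v ∈ Fl q d x p.val.1 (d + 1 - n) := by
  rw [(h.ann p).mem_eig_iff hq hn, h.low_eq hq, h.high_eq hq]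

theorem sp_intertwine {V' : Type*} [AddCommGroup V'] [Module 𝕜 V'] (σ : V →ₗ[𝕜] V')
    {a : End 𝕜 V} {b : End 𝕜 V'} (h : ∀ v, σ (a v) = b (σ v)) (n : ℕ) (v : V) :
    σ (sp q d a n v) = sp q d b n (σ v) := by
  unfold sp
  generalize Lagrange.basis (range (d + 1)) (th q d) n = p
  have hpow : ∀ (k : ℕ) (v : V), σ ((a ^ k) v) = (b ^ k) (σ v) := by
    intro k
    induction k with
    | zero => intro v; simp
    | succ k ih => intro v; rw [pow_succ, pow_succ, Module.End.mul_apply, Module.End.mul_apply, ih, h]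
  rw [aeval_eq_sum_range, aeval_eq_sum_range]
  simp [LinearMap.sum_apply, hpow]

/-- A linear map between two systems that intertwines `x_{01}` and `x_{23}` respects all four
flags, hence intertwines every generator. -/
theorem TetSys.intertwine {V' : Type*} [AddCommGroup V'] [Module 𝕜 V'] {x : TIdx → End 𝕜 V}
    {y : TIdx → End 𝕜 V'} (hx : TetSys q d x) (hy : TetSys q d y) (hq : QGen q) (σ : V →ₗ[𝕜] V')
    (h0 : ∀ v, σ (x (edge 0) v) = y (edge 0) (σ v)) (h2 : ∀ v, σ (x (edge 2) v) = y (edge 2) (σ v))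
    (p : TIdx) (v : V) : σ (x p v) = y p (σ v) := by
  have hlow : ∀ p, (∀ v, σ (x p v) = y p (σ v)) → ∀ m v, v ∈ Fl q d x p.val.2 m →
      σ v ∈ Fl q d y p.val.2 m := by
    intro p hp m v hv
    rw [← hx.low_eq hq] at hv
    rw [← hy.low_eq hq]
    intro n h1 h2
    rw [← sp_intertwine σ hp, hv n h1 h2, map_zero]
  have hhigh : ∀ p, (∀ v, σ (x p v) = y p (σ v)) → ∀ m v, v ∈ Fl q d x p.val.1 m →
      σ v ∈ Fl q d y p.val.1 m := by
    intro p hp m v hv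
    rw [← hx.high_eq hq] at hv
    rw [← hy.high_eq hq]
    intro n h1
    rw [← sp_intertwine σ hp, hv n h1, map_zero]
  have hall : ∀ (r : ZMod 4) m v, v ∈ Fl q d x r m → σ v ∈ Fl q d y r m := by
    intro r
    have e0 := hhigh _ h0
    have e1 := hlow _ h0
    have e2 := hhigh _ h2
    have e3 := hlow _ h2
    have hr : r = 0 ∨ r = 1 ∨ r = 2 ∨ r = 3 := by revert r; decide
    rcases hr with rfl | rfl | rfl | rfl
    · exact e0
    · exact e1
    · exact e2
    · exact e3
  have heig : ∀ n ≤ d, ∀ v, x p v = th q d n • v → y p (σ v) = th q d n • σ v := by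
    intro n hn v hv
    rw [hx.eig_iff hq p hn] at hv
    rw [hy.eig_iff hq p hn]
    exact ⟨hall _ _ _ hv.1, hall _ _ _ hv.2⟩
  rw [← sum_sp_apply (d := d) (x p) hq v]
  simp only [map_sum]
  refine sum_congr rfl fun n hn => ?_
  have hv := (hx.ann p).apply_sp hq n v
  rw [heig n (by have := mem_range.mp hn; omega) _ hv, hv, map_smul]

end Flags

/-! ### Cyclicity of the lowest eigenvectors -/

section Cyclic

open Polynomial Finset Module

variable {𝕜 : Type*} [Field 𝕜] {q : 𝕜} {d : ℕ} {V : Type*} [AddCommGroup V] [Module 𝕜 V]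

theorem sp_mem {x : End 𝕜 V} {N : Submodule 𝕜 V} (h : ∀ v ∈ N, x v ∈ N) (n : ℕ) {v : V}
    (hv : v ∈ N) : sp q d x n v ∈ N := by
  have hpow : ∀ k : ℕ, (x ^ k) v ∈ N := by
    intro k
    induction k with
    | zero => simpa using hv
    | succ k ih => rw [pow_succ', Module.End.mul_apply]; exact h _ ih
  unfold sp
  rw [aeval_eq_sum_range, LinearMap.sum_apply]
  exact N.sum_mem fun k _ => N.smul_mem _ (hpow k)

theorem Low_inf_High (hq : QGen q) (x : End 𝕜 V) {m : ℕ} (hm : m ≤ d + 1) :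
    Low q d x m ⊓ High q d x (d + 1 - m) = ⊥ := by
  rw [eq_bot_iff]
  rintro v ⟨h1, h2⟩
  rw [Submodule.mem_bot, ← sum_sp_apply (d := d) x hq v]
  refine sum_eq_zero fun n hn => ?_
  have := mem_range.mp hn
  by_cases hnm : m ≤ n
  · exact h1 n hnm (by omega)
  · exact h2 n (by omega)

variable [FiniteDimensional 𝕜 V]

theorem finrank_flags {x : End 𝕜 V} (hx : Ann q d x) (hq : QGen q) {N : Submodule 𝕜 V}
    (h : ∀ v ∈ N, x v ∈ N) {m : ℕ} (hm : m ≤ d + 1) :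
    finrank 𝕜 ↥(N ⊓ Low q d x m) + finrank 𝕜 ↥(N ⊓ High q d x (d + 1 - m)) = finrank 𝕜 N := by
  rw [← Submodule.finrank_sup_add_finrank_inf_eq]
  have h1 : (N ⊓ Low q d x m) ⊓ (N ⊓ High q d x (d + 1 - m)) = ⊥ := by
    rw [eq_bot_iff, ← Low_inf_High hq x hm]
    exact inf_le_inf inf_le_right inf_le_right
  have h2 : (N ⊓ Low q d x m) ⊔ (N ⊓ High q d x (d + 1 - m)) = N := by
    apply le_antisymm (sup_le inf_le_left inf_le_left)
    intro v hv
    rw [← sum_sp_apply (d := d) x hq v]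
    refine Submodule.sum_mem _ fun n hn => ?_
    have hn' := mem_range.mp hn
    have he := hx.apply_sp hq n v
    rw [hx.mem_eig_iff hq (by omega)] at he
    have hN := sp_mem (q := q) (d := d) h n hv
    by_cases hnm : m ≤ n
    · exact Submodule.mem_sup_right ⟨hN, High_mono x (by omega) he.2⟩
    · exact Submodule.mem_sup_left ⟨hN, Low_mono x (by omega) he.1⟩
  rw [h1, h2, finrank_bot, add_zero]

/-- A subspace stable under `x_{01}`, `x_{12}`, `x_{23}`, `x_{13}` is stable under all
generators: it meets the four flags in subspaces of equal dimensions, which forces it to be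
a sum of eigenspaces of every generator. -/
theorem TetSys.stable_all {x : TIdx → End 𝕜 V} (hx : TetSys q d x) (hq : QGen q)
    {N : Submodule 𝕜 V} (h01 : ∀ v ∈ N, x (edge 0) v ∈ N) (h12 : ∀ v ∈ N, x (edge 1) v ∈ N)
    (h23 : ∀ v ∈ N, x (edge 2) v ∈ N) (h13 : ∀ v ∈ N, x (diagIdx 1) v ∈ N) (p : TIdx) :
    ∀ v ∈ N, x p v ∈ N := by
  obtain ⟨f, hf⟩ : ∃ f : ZMod 4 → ℕ → ℕ, ∀ r m, finrank 𝕜 ↥(N ⊓ Fl q d x r m) = f r m :=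
    ⟨_, fun _ _ => rfl⟩
  have hst : ∀ p : TIdx, (∀ v ∈ N, x p v ∈ N) → ∀ m ≤ d + 1,
      f p.val.2 m + f p.val.1 (d + 1 - m) = finrank 𝕜 N := by
    intro p hp m hm
    have := finrank_flags (hx.ann p) hq hp hm
    rwa [hx.low_eq hq, hx.high_eq hq, hf, hf] at this
  have e01 : ∀ m ≤ d + 1, f 1 m + f 0 (d + 1 - m) = finrank 𝕜 N := hst _ h01
  have e12 : ∀ m ≤ d + 1, f 2 m + f 1 (d + 1 - m) = finrank 𝕜 N := hst _ h12
  have e23 : ∀ m ≤ d + 1, f 3 m + f 2 (d + 1 - m) = finrank 𝕜 N := hst _ h23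
  have e13 : ∀ m ≤ d + 1, f 3 m + f 1 (d + 1 - m) = finrank 𝕜 N := hst _ h13
  have hall : ∀ r : ZMod 4, ∀ m ≤ d + 1, f r m = f 2 m := by
    have a3 : ∀ m ≤ d + 1, f 3 m = f 2 m := fun m hm => by
      have := e12 m hm; have := e13 m hm; omega
    have a1 : ∀ m ≤ d + 1, f 1 m = f 2 m := fun m hm => by
      have h1 := e12 (d + 1 - m) (by omega)
      have h2 := e23 (d + 1 - m) (by omega)
      have h3 := a3 (d + 1 - m) (by omega)
      have e : d + 1 - (d + 1 - m) = m := by omega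
      rw [e] at h1 h2
      omega
    have a0 : ∀ m ≤ d + 1, f 0 m = f 2 m := fun m hm => by
      have h1 := e01 (d + 1 - m) (by omega)
      have h2 := e12 (d + 1 - m) (by omega)
      have h3 := a1 (d + 1 - m) (by omega)
      have h4 := a1 m hm
      have e : d + 1 - (d + 1 - m) = m := by omega
      rw [e] at h1 h2
      omega
    intro r
    have hr : r = 0 ∨ r = 1 ∨ r = 2 ∨ r = 3 := by revert r; decide
    rcases hr with rfl | rfl | rfl | rfl
    · exact a0
    · exact a1
    · exact fun m hm => rfl
    · exact a3
  have hsum : ∀ m ≤ d + 1, f 2 m + f 2 (d + 1 - m) = finrank 𝕜 N := fun m hm => by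
    rw [← e23 m hm, hall 3 m hm]
  -- The dimension count splits `N ⊓ Low (m + 1)` as `N ⊓ Low m` plus an eigenspace inside `N`.
  have hind : ∀ m ≤ d + 1, ∀ v ∈ N ⊓ Low q d (x p) m, x p v ∈ N := by
    intro m
    induction m with
    | zero =>
      rintro _ v ⟨-, hv⟩
      have : v = 0 := by
        rw [← sum_sp_apply (d := d) (x p) hq v]
        exact sum_eq_zero fun n hn => hv n (Nat.zero_le n) (by have := mem_range.mp hn; omega)
      rw [this, map_zero]; exact N.zero_mem
    | succ m ih =>
      intro hm v hv
      set L := N ⊓ Low q d (x p) (m + 1) with hL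
      set L0 := N ⊓ Low q d (x p) m with hL0
      set H := N ⊓ High q d (x p) (d + 1 - m) with hH
      have hL0L : L0 ≤ L := inf_le_inf_left _ (Low_mono _ (Nat.le_succ m))
      have fL : finrank 𝕜 L = f 2 (m + 1) := by
        rw [← hall p.val.2 _ hm, hL, hx.low_eq hq, hf]
      have fL0 : finrank 𝕜 L0 = f 2 m := by
        rw [← hall p.val.2 _ (by omega), hL0, hx.low_eq hq, hf]
      have fH : finrank 𝕜 H = f 2 (d + 1 - m) := by
        rw [← hall p.val.1 _ (by omega), hH, hx.high_eq hq, hf]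
      have hsup : finrank 𝕜 ↥(L ⊔ H) ≤ finrank 𝕜 N :=
        Submodule.finrank_mono (sup_le inf_le_left inf_le_left)
      have hi := Submodule.finrank_sup_add_finrank_inf_eq L H
      have hi0 := Submodule.finrank_sup_add_finrank_inf_eq L0 (L ⊓ H)
      have hbot : L0 ⊓ (L ⊓ H) = ⊥ := by
        rw [eq_bot_iff, ← Low_inf_High (d := d) hq (x p) (m := m) (by omega)]
        exact inf_le_inf inf_le_right (inf_le_right.trans inf_le_right)
      rw [hbot, finrank_bot, add_zero] at hi0
      have hs := hsum m (by omega)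
      have heq : L0 ⊔ (L ⊓ H) = L :=
        Submodule.eq_of_le_of_finrank_le (sup_le hL0L inf_le_left) (by omega)
      rw [← heq, Submodule.mem_sup] at hv
      obtain ⟨a, ha, b, hb, rfl⟩ := hv
      rw [map_add]
      refine N.add_mem (ih (by omega) a ha) ?_
      rw [((hx.ann p).mem_eig_iff hq (n := m) (by omega)).mpr ⟨hb.1.2, hb.2.2⟩]
      exact N.smul_mem _ hb.1.1
  intro v hv
  exact hind (d + 1) le_rfl v ⟨hv, fun n h1 h2 => by omega⟩

/-- In an irreducible system, a nonzero vector with `x_{01} v = q^{-d} v` is cyclic for the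
algebra generated by `x_{01}` and `x_{23}`. -/
theorem TetSys.cyclic {x : TIdx → End 𝕜 V} (hx : TetSys q d x) (hq : QGen q)
    (hirr : ∀ W : Submodule 𝕜 V, (∀ p, ∀ v ∈ W, x p v ∈ W) → W = ⊥ ∨ W = ⊤)
    {v : V} (hv0 : v ≠ 0) (hv : x (edge 0) v = th q d 0 • v) (u : V) :
    ∃ w : FreeAlgebra 𝕜 Bool, ev (x (edge 0)) (x (edge 2)) w v = u := by
  set A := x (edge 0) with hA
  set B := x (edge 2) with hB
  set φ : FreeAlgebra 𝕜 Bool →ₗ[𝕜] V :=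
    (LinearMap.applyₗ v).comp (ev (𝕜 := 𝕜) A B).toLinearMap with hφ
  have hφa : ∀ w, φ w = ev A B w v := fun w => rfl
  set N := LinearMap.range φ with hN
  have hvN : v ∈ N := ⟨1, by rw [hφa, map_one]; rfl⟩
  have hAN : ∀ u ∈ N, A u ∈ N := by
    rintro _ ⟨w, rfl⟩
    exact ⟨FreeAlgebra.ι 𝕜 false * w, by rw [hφa, hφa, map_mul, ev_ι]; rfl⟩
  have hBN : ∀ u ∈ N, B u ∈ N := by
    rintro _ ⟨w, rfl⟩
    exact ⟨FreeAlgebra.ι 𝕜 true * w, by rw [hφa, hφa, map_mul, ev_ι]; rfl⟩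
  have hmin : ∀ S : Submodule 𝕜 V, v ∈ S → (∀ u ∈ S, A u ∈ S) → (∀ u ∈ S, B u ∈ S) → N ≤ S := by
    rintro S hvS hAS hBS _ ⟨w, rfl⟩
    rw [hφa]
    have : ∀ u ∈ S, ev A B w u ∈ S := by
      induction w using FreeAlgebra.induction with
      | grade0 r =>
        intro u hu
        rw [AlgHom.commutes, Module.algebraMap_end_apply]
        exact S.smul_mem _ hu
      | grade1 g =>
        intro u hu
        rw [ev_ι]
        cases g
        · exact hAS u hu
        · exact hBS u hu
      | mul a b ha hb => intro u hu; rw [map_mul]; exact ha _ (hb _ hu)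
      | add a b ha hb => intro u hu; rw [map_add]; exact S.add_mem (ha _ hu) (hb _ hu)
    exact this v hvS
  have hvF := ((hx.eig_iff hq (edge 0) (Nat.zero_le d)).mp hv).1
  have htop : ∀ r (u : V), u ∈ Fl q d x r (d + 1) := fun r u n hn => by omega
  have hX : x (edge 1) v = th q d d • v :=
    (hx.eig_iff hq (edge 1) le_rfl).mpr ⟨htop _ _, by
      have : d + 1 - d = 0 + 1 := by omega
      rw [this]; exact hvF⟩
  have hY : x (diagIdx 1) v = th q d d • v :=
    (hx.eig_iff hq (diagIdx 1) le_rfl).mpr ⟨htop _ _, by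
      have : d + 1 - d = 0 + 1 := by omega
      rw [this]; exact hvF⟩
  have h12 : ∀ u ∈ N, x (edge 1) u ∈ N := by
    have hq1 : QW q A (x (edge 1)) := hx.qrel _ _ (by decide) (by decide)
    have hq2 : QW q (x (edge 1)) B := hx.qrel _ _ (by decide) (by decide)
    have := hmin (N ⊓ N.comap (x (edge 1))) ⟨hvN, by
        change x (edge 1) v ∈ N
        rw [hX]; exact N.smul_mem _ hvN⟩
      (by
        rintro u ⟨h1, h2⟩
        refine ⟨hAN u h1, ?_⟩
        change x (edge 1) (A u) ∈ N
        rw [hq1.yx hq]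
        exact N.sub_mem (N.smul_mem _ (hAN _ h2)) (N.smul_mem _ h1))
      (by
        rintro u ⟨h1, h2⟩
        refine ⟨hBN u h1, ?_⟩
        change x (edge 1) (B u) ∈ N
        rw [← N.smul_mem_iff (pow_ne_zero 2 hq.ne0), hq2.xy hq]
        exact N.add_mem (hBN _ h2) (N.smul_mem _ h1))
    exact fun u hu => (this hu).2
  -- Moving `Y = x_{13}` past `x_{23}` produces a `Y ^ 2`, so stability is shown for all powers of `Y`
  -- at once.
  have h13 : ∀ u ∈ N, x (diagIdx 1) u ∈ N := by
    set Y := x (diagIdx 1) with hYdef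
    have hq1 : QW q A Y := hx.qrel _ _ (by decide) (by decide)
    have hq2 : QW q B (x (diagIdx 3)) := hx.qrel _ _ (by decide) (by decide)
    have hi1 : Y * x (diagIdx 3) = 1 := hx.inv _ _ (by decide) (by decide)
    have hi2 : x (diagIdx 3) * Y = 1 := hx.inv _ _ (by decide) (by decide)
    have hi1' : ∀ u, Y (x (diagIdx 3) u) = u := fun u =>
      congrArg (fun f : End 𝕜 V => f u) hi1
    have hi2' : ∀ u, x (diagIdx 3) (Y u) = u := fun u =>
      congrArg (fun f : End 𝕜 V => f u) hi2
    have hYB : ∀ u, q ^ 2 • Y (B u) = B (Y u) + (q ^ 2 - 1) • Y (Y u) := by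
      intro u
      have h1 := congrArg Y (hq2.xy hq (Y u))
      rw [hi2', map_smul, map_add, hi1', map_smul] at h1
      exact h1
    set S : Submodule 𝕜 V := ⨅ k : ℕ, N.comap (Y ^ k) with hS
    have hmS : ∀ u, u ∈ S ↔ ∀ k : ℕ, (Y ^ k) u ∈ N := by
      intro u; simp [hS]
    have hYS : ∀ u ∈ S, Y u ∈ S := by
      intro u hu
      rw [hmS] at hu ⊢
      intro k
      have := hu (k + 1)
      rwa [pow_succ] at this
    have hSN : ∀ u ∈ S, u ∈ N := fun u hu => by simpa using (hmS u).mp hu 0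
    have := hmin S
      (by
        rw [hmS]
        intro k
        have : ∀ k : ℕ, (Y ^ k) v = (th q d d) ^ k • v := by
          intro k
          induction k with
          | zero => simp
          | succ k ih =>
            rw [pow_succ', Module.End.mul_apply, ih, map_smul, hY, smul_smul, pow_succ]
        rw [this]; exact N.smul_mem _ hvN)
      (by
        have : ∀ k : ℕ, ∀ u ∈ S, (Y ^ k) (A u) ∈ N := by
          intro k
          induction k with
          | zero => intro u hu; simpa using hAN u (hSN u hu)
          | succ k ih =>
            intro u hu
            rw [pow_succ, Module.End.mul_apply, hq1.yx hq, map_sub, map_smul, map_smul]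
            exact N.sub_mem (N.smul_mem _ (ih _ (hYS u hu))) (N.smul_mem _ ((hmS u).mp hu k))
        intro u hu
        rw [hmS]
        exact fun k => this k u hu)
      (by
        have : ∀ k : ℕ, ∀ u ∈ S, (Y ^ k) (B u) ∈ N := by
          intro k
          induction k with
          | zero => intro u hu; simpa using hBN u (hSN u hu)
          | succ k ih =>
            intro u hu
            rw [← N.smul_mem_iff (pow_ne_zero 2 hq.ne0), pow_succ Y k, Module.End.mul_apply,
              ← map_smul, hYB, map_add, map_smul]
            exact N.add_mem (ih _ (hYS u hu))
              (N.smul_mem _ ((hmS _).mp (hYS _ (hYS u hu)) k))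
        intro u hu
        rw [hmS]
        exact fun k => this k u hu)
    exact fun u hu => by simpa using (hmS u).mp (this hu) 1
  rcases hirr N (hx.stable_all hq hAN h12 hBN h13) with h | h
  · exact absurd ((Submodule.mem_bot 𝕜).mp (h ▸ hvN)) hv0
  · obtain ⟨w, hw⟩ : u ∈ N := by rw [h]; trivial
    exact ⟨w, hw⟩

end Cyclic

/-! ### Isomorphism with the dual system -/

section Duality

open Polynomial Finset Module MulOpposite

variable {𝕜 : Type*} [Field 𝕜] {q : 𝕜} {d : ℕ} {V : Type*} [AddCommGroup V] [Module 𝕜 V]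

variable (𝕜 V) in
/-- Transposition, as an algebra homomorphism to the opposite of the endomorphism algebra of
the dual space. -/
def trp : End 𝕜 V →ₐ[𝕜] (End 𝕜 (Dual 𝕜 V))ᵐᵒᵖ :=
  AlgHom.ofLinearMap
    ((opLinearEquiv 𝕜).toLinearMap.comp (Dual.transpose (R := 𝕜) (M := V) (M' := V)))
    rfl (fun _ _ => rfl)

theorem trp_apply (f : End 𝕜 V) : trp 𝕜 V f = op f.dualMap := rfl

theorem dualMap_mul (f g : End 𝕜 V) :
    (f * g : End 𝕜 V).dualMap = (g.dualMap * f.dualMap : End 𝕜 (Dual 𝕜 V)) := rfl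

theorem Ann.dual {f : End 𝕜 V} (h : Ann q d f) : Ann q d (f.dualMap : End 𝕜 (Dual 𝕜 V)) := by
  unfold Ann at h ⊢
  apply op_injective
  have h1 := aeval_op (𝕜 := 𝕜) (f.dualMap : End 𝕜 (Dual 𝕜 V))
    (∏ n ∈ range (d + 1), (X - C (th q d n)))
  refine h1.symm.trans ?_
  rw [← trp_apply, aeval_algHom_apply, h, map_zero, op_zero]

theorem QW.dual {f g : End 𝕜 V} (h : QW q f g) : QW q (g.dualMap : End 𝕜 (Dual 𝕜 V)) f.dualMap := by
  have := congrArg (trp 𝕜 V) h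
  simp only [map_sub, map_smul, map_mul, map_one, trp_apply] at this
  have := congrArg unop this
  simpa [QW] using this

theorem Serre.dual {f g : End 𝕜 V} (h : Serre q f g) :
    Serre q (f.dualMap : End 𝕜 (Dual 𝕜 V)) g.dualMap := by
  have := congrArg (trp 𝕜 V) h
  simp only [map_add, map_smul, map_mul, map_pow, trp_apply] at this
  have := congrArg unop this
  simp only [unop_add, unop_smul, unop_mul, unop_pow, unop_op] at this
  unfold Serre
  rw [mul_assoc, mul_assoc, add_comm, ← this, add_comm]

/-- The reflection `(i, j) ↦ (1 - j, 1 - i)` of the index set; it fixes the edges `01` and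
`23`. -/
def refl1 (p : TIdx) : TIdx :=
  ⟨(1 - p.val.2, 1 - p.val.1), by
    have h : 1 - p.val.1 - (1 - p.val.2) = p.val.2 - p.val.1 := by ring
    rw [h]; exact p.prop⟩

theorem refl1_sub (p : TIdx) : (refl1 p).val.2 - (refl1 p).val.1 = p.val.2 - p.val.1 := by
  simp [refl1]

/-- The dual space is again a system, with the transposes re-indexed by the reflection. -/
theorem TetSys.dual {x : TIdx → End 𝕜 V} (h : TetSys q d x) :
    TetSys q d (fun p => ((x (refl1 p)).dualMap : End 𝕜 (Dual 𝕜 V))) where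
  ann p := (h.ann _).dual
  inv p r h1 h2 := by
    rw [← dualMap_mul, h.inv (refl1 r) (refl1 p) (by simp [refl1, h1]) (by simp [refl1, h2])]
    rfl
  qrel p r h1 h2 := by
    refine (h.qrel (refl1 r) (refl1 p) (by simp [refl1, h1]) ?_).dual
    rw [refl1_sub, refl1_sub]
    exact fun h => h2 h.symm
  serre p r h1 h2 h3 := by
    refine (h.serre (refl1 p) (refl1 r) ((refl1_sub p).trans h1) ?_ ((refl1_sub r).trans h3)).dual
    have e : (refl1 r).val.1 - (refl1 p).val.2 =
      -((p.val.2 - p.val.1) + (r.val.1 - p.val.2) + (r.val.2 - r.val.1)) := by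
      simp only [refl1]; ring
    rw [e, h1, h2, h3]; decide

theorem TetSys.tdPair {x : TIdx → End 𝕜 V} (h : TetSys q d x) :
    TDPair q d (x (edge 0)) (x (edge 2)) :=
  ⟨h.ann _, h.ann _, h.serre _ _ (by decide) (by decide) (by decide),
    h.serre _ _ (by decide) (by decide) (by decide)⟩

theorem star_ι_bool (b : Bool) :
    star (FreeAlgebra.ι 𝕜 b) = (FreeAlgebra.ι 𝕜 b : FreeAlgebra 𝕜 Bool) := FreeAlgebra.star_ι b

/-- An irreducible system is isomorphic to its dual.  With `e` the idempotent of `x_{01}` for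
`q^{-d}`, `v` in its image and `ε` a functional that factors through `e`, the isomorphism is
`w v ↦ (u ↦ ε (w* u))`, where `w` runs through the words in `x_{01}`, `x_{23}` and `w*` is the
reversed word.  It is well defined because `e w* e = e w e`. -/
theorem TetSys.exists_dual_iso [FiniteDimensional 𝕜 V] {x : TIdx → End 𝕜 V}
    (hx : TetSys q d x) (hq : QGen q)
    (hirr : ∀ W : Submodule 𝕜 V, (∀ p, ∀ v ∈ W, x p v ∈ W) → W = ⊥ ∨ W = ⊤)
    {v : V} (hv0 : v ≠ 0) (hv : x (edge 0) v = th q d 0 • v) :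
    ∃ σ : V ≃ₗ[𝕜] Dual 𝕜 V, ∀ p u, σ (x p u) = (x (refl1 p)).dualMap (σ u) := by
  set A := x (edge 0) with hA
  set B := x (edge 2) with hB
  set e := sp q d A 0 with he
  have hev : e v = v := by
    conv_rhs => rw [← sum_sp_apply (d := d) A hq v]
    rw [sum_eq_single 0]
    · intro k _ hk
      exact (hx.ann _).sp_eq_zero hq hv fun h => hk (th_inj hq h)
    · intro h; exact absurd (mem_range.mpr (by omega)) h
  obtain ⟨ε0, hε0⟩ : ∃ ε0 : Dual 𝕜 V, ε0 v ≠ 0 := by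
    by_contra! h
    exact hv0 ((Module.forall_dual_apply_eq_zero_iff 𝕜 v).mp h)
  set φ : FreeAlgebra 𝕜 Bool →ₗ[𝕜] V :=
    (LinearMap.applyₗ v).comp (ev (𝕜 := 𝕜) A B).toLinearMap with hφ
  have hφa : ∀ w, φ w = ev A B w v := fun w => rfl
  have hsurj : ∀ u, ∃ w, φ w = u := hx.cyclic hq hirr hv0 hv
  have hkey : ∀ w w' : FreeAlgebra 𝕜 Bool,
      ε0 (e (ev A B (star w) (φ w'))) = ε0 (e (ev A B (star w') (φ w))) := by
    intro w w'
    have h1 := congrArg (fun f : End 𝕜 V => ε0 (f v)) (hx.tdPair.key hq (star w * w'))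
    simp only [star_mul, star_star, map_mul, Module.End.mul_apply, ← hA, ← hB, ← he, hev] at h1
    exact h1.symm
  have hwd : ∀ w w1, φ w = φ w1 → ∀ u,
      ε0 (e (ev A B (star w) u)) = ε0 (e (ev A B (star w1) u)) := by
    intro w w1 h u
    obtain ⟨w', rfl⟩ := hsurj u
    rw [hkey, h, ← hkey]
  obtain ⟨s, hs⟩ := φ.exists_rightInverse_of_surjective (LinearMap.range_eq_top.mpr hsurj)
  have hs' : ∀ u, φ (s u) = u := fun u => congrArg (fun f : V →ₗ[𝕜] V => f u) hs
  set σ : V →ₗ[𝕜] Dual 𝕜 V :=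
    { toFun := fun u => ε0.comp (e.comp (ev A B (star (s u))))
      map_add' := by
        intro a b; ext u
        simp
      map_smul' := by
        intro c a; ext u
        have h1 : star (c • s a) = c • star (s a) := by
          rw [Algebra.smul_def, star_mul, FreeAlgebra.star_algebraMap, ← Algebra.commutes,
            ← Algebra.smul_def]
        simp [h1] } with hσ
  have hσa : ∀ w u, σ (φ w) u = ε0 (e (ev A B (star w) u)) := by
    intro w u
    exact hwd _ _ (hs' (φ w)) u
  have h0 : ∀ u, σ (A u) = A.dualMap (σ u) := by
    intro u
    obtain ⟨w, rfl⟩ := hsurj u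
    have h1 : A (φ w) = φ (FreeAlgebra.ι 𝕜 false * w) := by
      rw [hφa, hφa, map_mul, ev_ι]; rfl
    ext z
    rw [h1, hσa, LinearMap.dualMap_apply, hσa, star_mul, star_ι_bool, map_mul, ev_ι]
    rfl
  have h2 : ∀ u, σ (B u) = B.dualMap (σ u) := by
    intro u
    obtain ⟨w, rfl⟩ := hsurj u
    have h1 : B (φ w) = φ (FreeAlgebra.ι 𝕜 true * w) := by
      rw [hφa, hφa, map_mul, ev_ι]; rfl
    ext z
    rw [h1, hσa, LinearMap.dualMap_apply, hσa, star_mul, star_ι_bool, map_mul, ev_ι]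
    rfl
  have e0 : refl1 (edge 0) = edge 0 := Subtype.ext (by decide)
  have e2 : refl1 (edge 2) = edge 2 := Subtype.ext (by decide)
  have hall := hx.intertwine hx.dual hq σ (by rw [e0]; exact h0) (by rw [e2]; exact h2)
  have hσv : σ v v ≠ 0 := by
    have h1 : v = φ 1 := by rw [hφa, map_one]; rfl
    have h2 : σ (φ 1) v = ε0 v := by
      rw [hσa, star_one, map_one, Module.End.one_apply, hev]
    rw [← h1] at h2
    rwa [h2]
  have hker : LinearMap.ker σ = ⊥ := by
    refine (hirr (LinearMap.ker σ) fun p u hu => ?_).resolve_right fun h => ?_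
    · rw [LinearMap.mem_ker] at hu ⊢
      rw [hall, hu, map_zero]
    · have : v ∈ LinearMap.ker σ := by rw [h]; trivial
      rw [LinearMap.mem_ker] at this
      exact hσv (by rw [this]; rfl)
  exact ⟨LinearEquiv.ofInjectiveOfFinrankEq σ (LinearMap.ker_eq_bot.mp hker)
    (Subspace.dual_finrank_eq).symm, hall⟩

end Duality

/-! ### The double shift and the translation to representations -/

section Twist

open Polynomial Finset Module

variable {𝕜 : Type*} [Field 𝕜] {q : 𝕜} {d : ℕ} {V : Type*} [AddCommGroup V] [Module 𝕜 V]

theorem TetSys.shift {x : TIdx → End 𝕜 V} (h : TetSys q d x) :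
    TetSys q d (fun p => x (tshift p)) where
  ann p := h.ann _
  inv p r h1 h2 := h.inv _ _ (by simp [tshift, h1]) (by simp [tshift, h2])
  qrel p r h1 h2 := h.qrel _ _ (by simp [tshift, h1]) (by simpa [tshift] using h2)
  serre p r h1 h2 h3 :=
    h.serre _ _ (by simpa [tshift] using h1) (by simpa [tshift] using h2)
      (by simpa [tshift] using h3)

theorem exists_tshift (p : TIdx) : ∃ r, tshift r = p := by
  refine ⟨⟨(p.val.1 - 1, p.val.2 - 1), by simpa using p.prop⟩, ?_⟩
  apply Subtype.ext
  simp [tshift]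

/-- The reflections of `x` and of its shift differ by the double shift. -/
theorem tshift_refl1_tshift (p : TIdx) : tshift (refl1 (tshift p)) = refl1 p := by
  apply Subtype.ext
  simp only [tshift, refl1, Prod.mk.injEq]
  constructor <;> ring

/-- An irreducible system is isomorphic to its double shift: both have the same dual. -/
theorem TetSys.exists_double_shift_iso [FiniteDimensional 𝕜 V] {x : TIdx → End 𝕜 V}
    (hx : TetSys q d x) (hq : QGen q)
    (hirr : ∀ W : Submodule 𝕜 V, (∀ p, ∀ v ∈ W, x p v ∈ W) → W = ⊥ ∨ W = ⊤)
    (heig : ∀ p, ∃ v, v ≠ 0 ∧ x p v = th q d 0 • v) :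
    ∃ σ : V ≃ₗ[𝕜] V, ∀ p v, σ (x p v) = x (tshift (tshift p)) (σ v) := by
  obtain ⟨v, hv0, hv⟩ := heig (edge 0)
  obtain ⟨v', hv0', hv'⟩ := heig (tshift (edge 0))
  obtain ⟨σ, hσ⟩ := hx.exists_dual_iso hq hirr hv0 hv
  obtain ⟨σ', hσ'⟩ := hx.shift.exists_dual_iso hq (fun W hW => hirr W fun p => by
    obtain ⟨r, rfl⟩ := exists_tshift p
    exact hW r) hv0' hv'
  refine ⟨σ.trans σ'.symm, fun p u => ?_⟩
  apply σ'.injective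
  rw [hσ', LinearEquiv.trans_apply, LinearEquiv.trans_apply, LinearEquiv.apply_symm_apply,
    LinearEquiv.apply_symm_apply, hσ, tshift_refl1_tshift]

end Twist

section Translation

open Polynomial Finset Module

variable {𝕜 : Type} [Field 𝕜] {q : 𝕜} {d : ℕ} {V : Type} [AddCommGroup V] [Module 𝕜 V]

theorem ann_of_semisimple {f : End 𝕜 V} (hs : SemisimpleOn 𝕜 f)
    (he : EigSet 𝕜 f = {θ : 𝕜 | ∃ n : ℕ, n ≤ d ∧ θ = q ^ ((d : ℤ) - 2 * (n : ℤ))}) :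
    Ann q d f := by
  unfold Ann
  set P : 𝕜[X] := ∏ n ∈ range (d + 1), (X - C (th q d n)) with hP
  have hle : (⊤ : Submodule 𝕜 V) ≤ LinearMap.ker (aeval f P) := by
    rw [← hs]
    refine iSup_le fun θ v hv => ?_
    rw [LinearMap.mem_ker]
    by_cases hv0 : v = 0
    · rw [hv0, map_zero]
    have hθ : θ ∈ EigSet 𝕜 f := fun h => hv0 ((Submodule.mem_bot 𝕜).mp (h ▸ hv))
    rw [he] at hθ
    obtain ⟨n, hn, hθn⟩ := hθ
    rw [Module.End.aeval_apply_of_hasEigenvector ⟨hv, hv0⟩, hP, eval_prod,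
      prod_eq_zero (i := d - n) (mem_range.mpr (by omega)), zero_smul]
    simp only [eval_sub, eval_X, eval_C]
    rw [hθn, th, sub_eq_zero]
    congr 1
    push_cast [Nat.cast_sub hn]; ring
  ext v
  exact LinearMap.mem_ker.mp (hle (Submodule.mem_top (x := v)))

theorem eig_of_eigSet {f : End 𝕜 V}
    (he : EigSet 𝕜 f = {θ : 𝕜 | ∃ n : ℕ, n ≤ d ∧ θ = q ^ ((d : ℤ) - 2 * (n : ℤ))}) :
    ∃ v, v ≠ 0 ∧ f v = th q d 0 • v := by
  have h : th q d 0 ∈ EigSet 𝕜 f := by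
    rw [he]
    refine ⟨d, le_rfl, ?_⟩
    unfold th
    congr 1
    push_cast; ring
  obtain ⟨v, hv, hv0⟩ := (Submodule.ne_bot_iff _).mp h
  exact ⟨v, hv0, Module.End.mem_eigenspace_iff.mp hv⟩

theorem tetSys_of_rep (π : TetQ 𝕜 q →ₐ[𝕜] End 𝕜 V) (hann : ∀ p, Ann q d (π (tg 𝕜 q p))) :
    TetSys q d (fun p => π (tg 𝕜 q p)) where
  ann := hann
  inv p r h1 h2 := by
    obtain ⟨⟨i, j⟩, hp⟩ := p
    obtain ⟨⟨k, l⟩, hr⟩ := r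
    simp only at h1 h2
    subst h1 h2
    have h3 : j - i = 2 ∧ i - j = 2 := by
      revert i j; decide
    have := congrArg π (RingQuot.mkAlgHom_rel 𝕜 (TetRel.inv (q := q) i j h3.1 h3.2))
    rw [map_mul, map_mul, map_one, map_one] at this
    exact this
  qrel p r h1 h2 := by
    have := congrArg π (RingQuot.mkAlgHom_rel 𝕜 (TetRel.qrel (q := q) p r h1 h2))
    simp only [map_sub, map_smul, map_mul, map_one] at this
    exact this
  serre p r h1 h2 h3 := by
    have := congrArg π (RingQuot.mkAlgHom_rel 𝕜
      (TetRel.serre (q := q) p.val.1 p.val.2 r.val.1 r.val.2 h1 h2 h3))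
    simp only [map_add, map_smul, map_mul, map_pow] at this
    exact this

theorem stable_of_gen (π : TetQ 𝕜 q →ₐ[𝕜] End 𝕜 V) {W : Submodule 𝕜 V}
    (hW : ∀ p, ∀ v ∈ W, π (tg 𝕜 q p) v ∈ W) (a : TetQ 𝕜 q) : ∀ v ∈ W, π a v ∈ W := by
  obtain ⟨a, rfl⟩ := RingQuot.mkAlgHom_surjective 𝕜 (TetRel 𝕜 q) a
  induction a using FreeAlgebra.induction with
  | grade0 r =>
    intro v hv
    rw [AlgHom.commutes, AlgHom.commutes, Module.algebraMap_end_apply]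
    exact W.smul_mem _ hv
  | grade1 p => exact hW p
  | mul a b ha hb => intro v hv; rw [map_mul, map_mul]; exact ha _ (hb _ hv)
  | add a b ha hb => intro v hv; rw [map_add, map_add]; exact W.add_mem (ha _ hv) (hb _ hv)

end Translation

/-- A finite-dimensional irreducible `⊠_q`-module of type 1 is isomorphic to its twist
by `ρ²`: there is a linear bijection `σ` with `σ ∘ x_{ij} = x_{i+2,j+2} ∘ σ`. -/
theorem stmt19 [IsAlgClosed F] [CharZero F] (q : F) (hq0 : q ≠ 0)
    (hq1 : ∀ n : ℕ, 0 < n → q ^ n ≠ 1)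
    (V : Type) [AddCommGroup V] [Module F V] [FiniteDimensional F V]
    (π : TetQ F q →ₐ[F] Module.End F V) (hirr : IsIrrep F π)
    (hty : ∃ d : ℕ, ∀ p : TIdx, SemisimpleOn F (π (tg F q p)) ∧
      EigSet F (π (tg F q p)) =
        {θ : F | ∃ n : ℕ, n ≤ d ∧ θ = q ^ ((d : ℤ) - 2 * (n : ℤ))}) :
    ∃ σ : V ≃ₗ[F] V, ∀ (p : TIdx) (v : V),
      σ (π (tg F q p) v) = π (tg F q (tshift (tshift p))) (σ v) := by
  obtain ⟨d, hd⟩ := hty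
  exact (tetSys_of_rep π fun p => ann_of_semisimple (hd p).1 (hd p).2).exists_double_shift_iso
    ⟨hq0, hq1⟩ (fun W hW => hirr.2 W (stable_of_gen π hW)) fun p => eig_of_eigSet (hd p).2
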